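/- arXiv:1511.02430 — 2 statements merged into one kernel-verified Lean document; each statement's English description precedes it below -/
import Mathlib

section
/- There exists a constant C > 0 depending only on j such that for all integers l₁, l₂ ≥ 0 and all nonnegative measurable functions f₁, f₂ : Ż × ℝ → [0,∞] satisfying fᵢ(k,τ) = 0 whenever ⟨τ − k^{2j+1}⟩ ∉ [2^{lᵢ}, 2^{lᵢ+1}) (i = 1,2), one has (Σ_{k∈ℤ} ∫_ℝ (f₁∗f₂)(k,τ)² dτ)^{1/2} ≤ C·(min(2^{l₁}, 2^{l₂}))^{1/2}·(max(2^{l₁}, 2^{l₂}))^{1/(2(2j+1))}·‖f₁‖_{ℓ²L²}·‖f₂‖_{ℓ²L²}. -/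
/-!
Write `n = 2 j + 1` and, using that the convolution is commutative, suppose `l₁ ≤ l₂`. The support
of `f₁ k` lies in an interval of length `4 * 2 ^ l₁` (`volume_strip`). Put `R = 2 ^ (l₂ / n)` and
bound the output differently according to the size of its frequency `k`.

* If `|k| ≤ R`, Cauchy–Schwarz with factors `f₁` and `1_{strip} f₂` gives
  `‖(f₁ ∗ f₂)(k)‖² ≤ 4 * 2 ^ l₁ ‖f₁‖² ‖f₂‖²` (`lintegral_conv_sq_le_low`), and there are at most `3 R`
  such `k`.
* If `|k| > R`, Cauchy–Schwarz with factors `f₁ f₂` and `1` on the interaction set bounds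
  `(f₁ ∗ f₂)²` by `(f₁² ∗ f₂²)` times the measure of that set (`lintegral_conv_sq_le_high`). This
  measure is at most `4 * 2 ^ l₁` times the number of `k₁` such that `k₁ ^ n + (k - k₁) ^ n` is within
  `4 * 2 ^ l₂` of `τ`. Centred at `k / 2` this function is even, and it separates points on either
  side at rate at least `|k| d ^ (2 j)` (`resonance`), so there are at most `18 R` such `k₁`
  (`count_bound`).

Summation over `k` gives the square of the claim with constant `12 + 72 ≤ 10 ^ 2`
(`tsum_lintegral_conv_sq_le`). The splitting is necessary for this argument: for small `k ≠ 0` the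
number of admissible `k₁` can be of order `(2 ^ l₂ / |k|) ^ (1 / (2 j))`, which exceeds `R`.
-/

open MeasureTheory
open scoped ENNReal

noncomputable section

/-- Japanese bracket `⟨x⟩ = (1+x²)^{1/2}`. -/
def jap (x : ℝ) : ℝ := Real.sqrt (1 + x ^ 2)

/-- Modulation `σ = τ − k^{2j+1}` for the dispersion `P(k) = k^{2j+1}`. -/
def sig (j : ℕ) (k : ℤ) (τ : ℝ) : ℝ := τ - (k : ℝ) ^ (2 * j + 1)

/-- Convolution on `Ż × ℝ` (only nonzero frequencies contribute):
`(f∗g)(k,τ) = Σ_{k₁≠0, k−k₁≠0} ∫ f(k₁,τ₁) g(k−k₁,τ−τ₁) dτ₁`. -/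
def conv (f g : ℤ → ℝ → ℝ≥0∞) (k : ℤ) (τ : ℝ) : ℝ≥0∞ :=
  ∑' k₁ : ℤ, if k₁ ≠ 0 ∧ k - k₁ ≠ 0 then ∫⁻ τ₁, f k₁ τ₁ * g (k - k₁) (τ - τ₁) else 0

/-- `ℓ²L²` norm: `(Σ_k ∫ f(k,τ)² dτ)^{1/2}`. -/
def l2L2 (f : ℤ → ℝ → ℝ≥0∞) : ℝ≥0∞ := (∑' k : ℤ, ∫⁻ τ, (f k τ) ^ 2) ^ (1 / 2 : ℝ)

/-! ### The resonance function and the counting of frequencies -/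

lemma pow_even_sub_ge (j : ℕ) (hj : 1 ≤ j) {x y : ℝ} (hx : 0 ≤ x) (hxy : x ≤ y) :
    (y - x) ^ (2 * j) ≤ y ^ (2 * j) - x ^ (2 * j) := by
  have h := pow_add_pow_le (sub_nonneg.2 hxy) hx (n := 2 * j) (by omega)
  rw [sub_add_cancel] at h
  linarith

/-- Growth of the even function `x ↦ (a + x) ^ n + (a - x) ^ n`, `n = 2 j + 1`: in its binomial
expansion only even powers of `x` survive, all with nonnegative coefficients when `a ≥ 0`, so the
increment is at least that of the top term `2 n a x ^ (2 j)`. -/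
lemma resonance_nonneg (j : ℕ) (hj : 1 ≤ j) {a x y : ℝ} (ha : 0 ≤ a) (hx : 0 ≤ x) (hxy : x ≤ y) :
    2 * a * (y - x) ^ (2 * j) ≤
      ((a + y) ^ (2 * j + 1) + (a - y) ^ (2 * j + 1))
        - ((a + x) ^ (2 * j + 1) + (a - x) ^ (2 * j + 1)) := by
  have key : ∀ m : ℕ, 0 ≤ y ^ m + (-y) ^ m - (x ^ m + (-x) ^ m) := by
    intro m
    rcases Nat.even_or_odd m with hm | hm
    · rw [hm.neg_pow, hm.neg_pow]
      have := pow_le_pow_left₀ hx hxy m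
      linarith
    · rw [hm.neg_pow, hm.neg_pow]; simp
  have expand : ∀ z : ℝ, (a + z) ^ (2 * j + 1) + (a - z) ^ (2 * j + 1) =
      ∑ m ∈ Finset.range (2 * j + 1 + 1),
        (z ^ m + (-z) ^ m) * a ^ (2 * j + 1 - m) * ((2 * j + 1).choose m : ℝ) := by
    intro z
    rw [add_comm a z, sub_eq_add_neg, add_comm a (-z), add_pow, add_pow, ← Finset.sum_add_distrib]
    exact Finset.sum_congr rfl fun m _ => by ring
  have hsum : ((a + y) ^ (2 * j + 1) + (a - y) ^ (2 * j + 1))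
        - ((a + x) ^ (2 * j + 1) + (a - x) ^ (2 * j + 1)) =
      ∑ m ∈ Finset.range (2 * j + 1 + 1),
        (y ^ m + (-y) ^ m - (x ^ m + (-x) ^ m)) * a ^ (2 * j + 1 - m)
          * ((2 * j + 1).choose m : ℝ) := by
    rw [expand, expand, ← Finset.sum_sub_distrib]
    exact Finset.sum_congr rfl fun m _ => by ring
  rw [hsum]
  refine le_trans ?_ (Finset.single_le_sum (a := 2 * j)
    (fun m _ => mul_nonneg (mul_nonneg (key m) (pow_nonneg ha _)) (Nat.cast_nonneg _))
    (Finset.mem_range.2 (by omega)))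
  have h1 := pow_even_sub_ge j hj hx hxy
  have h2 : 0 ≤ (y - x) ^ (2 * j) := pow_nonneg (by linarith) _
  have hev : Even (2 * j) := even_two_mul j
  rw [hev.neg_pow, hev.neg_pow, Nat.choose_succ_self_right, show 2 * j + 1 - 2 * j = 1 by omega,
    pow_one]
  have h3 : (1 : ℝ) ≤ ((2 * j + 1 : ℕ) : ℝ) := by exact_mod_cast Nat.le_add_left 1 _
  calc 2 * a * (y - x) ^ (2 * j) ≤ (y ^ (2 * j) + y ^ (2 * j) - (x ^ (2 * j) + x ^ (2 * j))) * a * 1 := by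
        nlinarith
    _ ≤ _ := mul_le_mul_of_nonneg_left h3 (mul_nonneg (by linarith) ha)

lemma resonance (j : ℕ) (hj : 1 ≤ j) (a : ℝ) {x y : ℝ} (hx : 0 ≤ x) (hxy : x ≤ y) :
    2 * |a| * (y - x) ^ (2 * j) ≤
      |((a + y) ^ (2 * j + 1) + (a - y) ^ (2 * j + 1))
        - ((a + x) ^ (2 * j + 1) + (a - x) ^ (2 * j + 1))| := by
  have hodd : Odd (2 * j + 1) := odd_two_mul_add_one j
  rcases le_total 0 a with ha | ha
  · rw [abs_of_nonneg ha]
    exact (resonance_nonneg j hj ha hx hxy).trans (le_abs_self _)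
  · rw [abs_of_nonpos ha]
    refine (resonance_nonneg j hj (neg_nonneg.2 ha) hx hxy).trans ((le_of_eq ?_).trans (neg_le_abs _))
    have e : ∀ z : ℝ, (-a + z) ^ (2 * j + 1) + (-a - z) ^ (2 * j + 1) =
        -((a + z) ^ (2 * j + 1) + (a - z) ^ (2 * j + 1)) := by
      intro z
      rw [show -a + z = -(a - z) by ring, show -a - z = -(a + z) by ring, hodd.neg_pow,
        hodd.neg_pow]
      ring
    rw [e, e]; ring

/-- A set of integers of diameter at most `D` has at most `D + 1` elements. -/
lemma card_of_diam {S : Set ℤ} {D : ℝ} (hD : 0 ≤ D)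
    (h : ∀ x ∈ S, ∀ y ∈ S, x ≤ y → ((y - x : ℤ) : ℝ) ≤ D) :
    ∃ t : Finset ℤ, S ⊆ t ∧ (t.card : ℝ) ≤ D + 1 := by
  classical
  rcases S.eq_empty_or_nonempty with rfl | ⟨x₀, hx₀⟩
  · exact ⟨∅, by simp, by simp; linarith⟩
  have hb : ∀ z, z ∈ S → x₀ - ⌊D⌋ ≤ z := by
    intro z hz
    rcases le_total z x₀ with hzx | hzx
    · have := Int.le_floor.2 (h z hz x₀ hx₀ hzx)
      omega
    · have := Int.floor_nonneg.2 hD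
      omega
  obtain ⟨m, hm, hmin⟩ := Int.exists_least_of_bdd (P := (· ∈ S)) ⟨_, hb⟩ ⟨x₀, hx₀⟩
  refine ⟨Finset.Icc m (m + ⌊D⌋), fun z hz => ?_, ?_⟩
  · have := Int.le_floor.2 (h m hm z hz (hmin z hz))
    simp only [Finset.coe_Icc, Set.mem_Icc]
    exact ⟨hmin z hz, by omega⟩
  · have h0 := Int.floor_nonneg.2 hD
    have : ((Finset.Icc m (m + ⌊D⌋)).card : ℤ) = ⌊D⌋ + 1 := by
      rw [Int.card_Icc]; omega
    have h2 : ((Finset.Icc m (m + ⌊D⌋)).card : ℝ) = ⌊D⌋ + 1 := by exact_mod_cast this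
    rw [h2]
    linarith [Int.floor_le D]

/-- Counting for high output frequency. With `R ^ (2 j + 1)` comparable to the larger modulation and
`|k| > R`, each of the two half-lines `k₁ ≥ k / 2` and `k₁ ≤ k / 2` meets the set in diameter at most
`8 R`: by `resonance`, `|k| d ^ (2 j) ≤ 8 R ^ (2 j + 1)` for two points at distance `d`. -/
lemma count_bound (j : ℕ) (hj : 1 ≤ j) {R : ℝ} (hR : 1 ≤ R) {k : ℤ} (hk : R < |(k : ℝ)|) (τ : ℝ) :
    ∃ t : Finset ℤ,
      {k₁ : ℤ | |τ - (k₁ : ℝ) ^ (2 * j + 1) - ((k - k₁ : ℤ) : ℝ) ^ (2 * j + 1)|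
        ≤ 4 * R ^ (2 * j + 1)} ⊆ t ∧ (t.card : ℝ) ≤ 18 * R := by
  classical
  set T := {k₁ : ℤ | |τ - (k₁ : ℝ) ^ (2 * j + 1) - ((k - k₁ : ℤ) : ℝ) ^ (2 * j + 1)|
        ≤ 4 * R ^ (2 * j + 1)} with hT
  have hR0 : 0 < R := by linarith
  -- `g (±x)` is the resonance value at `k₁ = k / 2 ± x`.
  set g : ℝ → ℝ := fun x => ((k : ℝ) / 2 + x) ^ (2 * j + 1) + ((k : ℝ) / 2 - x) ^ (2 * j + 1)
    with hg
  have step : ∀ x y : ℝ, 0 ≤ x → x ≤ y → |τ - g x| ≤ 4 * R ^ (2 * j + 1) →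
      |τ - g y| ≤ 4 * R ^ (2 * j + 1) → y - x ≤ 8 * R := by
    intro x y hx hxy h1 h2
    have h3 := resonance j hj ((k : ℝ) / 2) hx hxy
    have h4 : |g y - g x| ≤ 8 * R ^ (2 * j + 1) := by
      rw [abs_le] at *; constructor <;> linarith
    have h5 : |(k : ℝ)| * (y - x) ^ (2 * j) ≤ 8 * R ^ (2 * j + 1) := by
      refine le_trans (le_of_eq ?_) (h3.trans h4)
      rw [abs_div, abs_two]; ring
    have h0 : 0 ≤ (y - x) ^ (2 * j) := pow_nonneg (by linarith) _
    have h6 : R * (y - x) ^ (2 * j) ≤ R * (8 * R ^ (2 * j)) := by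
      calc R * (y - x) ^ (2 * j) ≤ |(k : ℝ)| * (y - x) ^ (2 * j) := by gcongr
        _ ≤ _ := h5
        _ = _ := by ring
    have h7 := le_of_mul_le_mul_left h6 hR0
    have h8 : (y - x) ^ (2 * j) ≤ (8 * R) ^ (2 * j) := by
      rw [mul_pow]
      refine h7.trans ?_
      gcongr
      exact le_self_pow₀ (by norm_num) (by omega)
    exact le_of_pow_le_pow_left₀ (by omega) (by positivity) h8
  have gval : ∀ k₁ : ℤ, (k₁ : ℝ) ^ (2 * j + 1) + ((k - k₁ : ℤ) : ℝ) ^ (2 * j + 1)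
      = g (k₁ - k / 2) := by
    intro k₁; simp only [hg]; push_cast; congr 2 <;> ring
  have gsymm : ∀ x, g (-x) = g x := by
    intro x; simp only [hg, sub_neg_eq_add, ← sub_eq_add_neg]; ring
  have hmem : ∀ k₁ ∈ T, |τ - g (k₁ - k / 2)| ≤ 4 * R ^ (2 * j + 1) := by
    intro k₁ h; rw [← gval, ← sub_sub]; exact h
  obtain ⟨t₁, h₁, c₁⟩ := card_of_diam (S := {k₁ | k₁ ∈ T ∧ (k : ℝ) / 2 ≤ k₁}) (D := 8 * R)
    (by positivity) (by
      rintro x ⟨hx, hx'⟩ y ⟨hy, hy'⟩ hxy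
      have hxy' : (x : ℝ) ≤ y := by exact_mod_cast hxy
      have := step _ _ (sub_nonneg.2 hx') (by linarith) (hmem x hx) (hmem y hy)
      push_cast; linarith)
  obtain ⟨t₂, h₂, c₂⟩ := card_of_diam (S := {k₁ | k₁ ∈ T ∧ (k₁ : ℝ) ≤ k / 2}) (D := 8 * R)
    (by positivity) (by
      rintro x ⟨hx, hx'⟩ y ⟨hy, hy'⟩ hxy
      have hxy' : (x : ℝ) ≤ y := by exact_mod_cast hxy
      have := step (-(y - k / 2)) (-(x - k / 2)) (by linarith) (by linarith)
        (by rw [gsymm]; exact hmem y hy) (by rw [gsymm]; exact hmem x hx)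
      push_cast; linarith)
  refine ⟨t₁ ∪ t₂, fun x hx => ?_, ?_⟩
  · rw [Finset.coe_union]
    rcases le_total ((k : ℝ) / 2) x with h | h
    · exact Or.inl (h₁ ⟨hx, h⟩)
    · exact Or.inr (h₂ ⟨hx, h⟩)
  · have : ((t₁ ∪ t₂).card : ℝ) ≤ t₁.card + t₂.card := by exact_mod_cast Finset.card_union_le _ _
    linarith

/-! ### Cauchy–Schwarz, convolutions and modulation strips -/

/-- Cauchy–Schwarz on `ℤ × ℝ` with counting measure times Lebesgue measure. -/
lemma tsum_lintegral_cauchy_schwarz {F G : ℤ → ℝ → ℝ≥0∞} (hF : ∀ k, Measurable (F k))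
    (hG : ∀ k, Measurable (G k)) :
    (∑' k, ∫⁻ τ, F k τ * G k τ) ^ 2 ≤
      (∑' k, ∫⁻ τ, F k τ ^ 2) * ∑' k, ∫⁻ τ, G k τ ^ 2 := by
  have hF' : Measurable (Function.uncurry F) := measurable_from_prod_countable_right hF
  have hG' : Measurable (Function.uncurry G) := measurable_from_prod_countable_right hG
  have hprod : ∀ H : ℤ × ℝ → ℝ≥0∞, Measurable H →
      ∫⁻ p, H p ∂((Measure.count : Measure ℤ).prod volume) = ∑' k, ∫⁻ τ, H (k, τ) := by
    intro H hH
    rw [lintegral_prod _ hH.aemeasurable, lintegral_count]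
  have h := ENNReal.lintegral_mul_le_Lp_mul_Lq ((Measure.count : Measure ℤ).prod volume)
    Real.HolderConjugate.two_two hF'.aemeasurable hG'.aemeasurable
  simp only [ENNReal.rpow_two] at h
  rw [hprod _ (hF'.mul hG'), hprod _ (hF'.pow_const 2), hprod _ (hG'.pow_const 2)] at h
  have h2 := pow_le_pow_left' h 2
  refine h2.trans (le_of_eq ?_)
  rw [← ENNReal.mul_rpow_of_nonneg _ _ (by norm_num), ← ENNReal.rpow_two, ← ENNReal.rpow_mul]
  norm_num [Function.uncurry]

lemma measurable_tsum_convolution {u v : ℤ → ℝ → ℝ≥0∞} (hu : ∀ k, Measurable (u k))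
    (hv : ∀ k, Measurable (v k)) (k : ℤ) :
    Measurable fun τ => ∑' k₁, ∫⁻ τ₁, u k₁ τ₁ * v (k - k₁) (τ - τ₁) := by
  refine Measurable.tsum fun k₁ => ?_
  exact (((hu k₁).comp measurable_snd).mul ((hv (k - k₁)).comp
    (measurable_fst.sub measurable_snd))).lintegral_prod_right'

lemma lintegral_tsum_convolution {u v : ℤ → ℝ → ℝ≥0∞} (hu : ∀ k, Measurable (u k))
    (hv : ∀ k, Measurable (v k)) (k : ℤ) :
    ∫⁻ τ, ∑' k₁, ∫⁻ τ₁, u k₁ τ₁ * v (k - k₁) (τ - τ₁) =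
      ∑' k₁, (∫⁻ τ, u k₁ τ) * ∫⁻ τ, v (k - k₁) τ := by
  have hm : ∀ k₁, Measurable (Function.uncurry fun τ τ₁ : ℝ => u k₁ τ₁ * v (k - k₁) (τ - τ₁)) :=
    fun k₁ => ((hu k₁).comp measurable_snd).mul
      ((hv (k - k₁)).comp (measurable_fst.sub measurable_snd))
  have hm' : ∀ k₁, Measurable fun τ => ∫⁻ τ₁, u k₁ τ₁ * v (k - k₁) (τ - τ₁) :=
    fun k₁ => (hm k₁).lintegral_prod_right'
  rw [lintegral_tsum fun k₁ => (hm' k₁).aemeasurable]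
  refine tsum_congr fun k₁ => ?_
  rw [lintegral_lintegral_swap (hm k₁).aemeasurable]
  have : ∀ τ₁ : ℝ, ∫⁻ τ, u k₁ τ₁ * v (k - k₁) (τ - τ₁) = u k₁ τ₁ * ∫⁻ τ, v (k - k₁) τ := by
    intro τ₁
    have hv' : Measurable fun τ => v (k - k₁) (τ - τ₁) := (hv _).comp (measurable_id.sub_const τ₁)
    rw [lintegral_const_mul _ hv',
      lintegral_sub_right_eq_self (fun τ => v (k - k₁) τ) τ₁]
  simp_rw [this]
  rw [lintegral_mul_const _ (hu k₁)]

lemma conv_comm (f g : ℤ → ℝ → ℝ≥0∞) : conv f g = conv g f := by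
  funext k τ
  unfold conv
  rw [← (Equiv.subLeft k).tsum_eq]
  refine tsum_congr fun k₁ => ?_
  simp only [Equiv.subLeft_apply, sub_sub_cancel]
  rw [← lintegral_sub_left_eq_self _ τ]
  simp only [sub_sub_cancel, and_comm, mul_comm]

lemma conv_le (f g : ℤ → ℝ → ℝ≥0∞) (k : ℤ) (τ : ℝ) :
    conv f g k τ ≤ ∑' k₁, ∫⁻ τ₁, f k₁ τ₁ * g (k - k₁) (τ - τ₁) := by
  refine ENNReal.tsum_le_tsum fun k₁ => ?_
  split_ifs <;> simp

/-- The strip of points of modulation at most `2 ^ (l + 1)`. -/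
def strip (j l : ℕ) (k : ℤ) : Set ℝ := {τ | |sig j k τ| ≤ 2 * 2 ^ l}

lemma measurableSet_strip (j l : ℕ) (k : ℤ) : MeasurableSet (strip j l k) := by
  unfold strip sig
  exact measurableSet_le (by fun_prop) (by fun_prop)

lemma volume_strip (j l : ℕ) (k : ℤ) : volume (strip j l k) = 4 * 2 ^ l := by
  have : strip j l k = Set.Icc ((k : ℝ) ^ (2 * j + 1) - 2 * 2 ^ l)
      ((k : ℝ) ^ (2 * j + 1) + 2 * 2 ^ l) := by
    ext τ
    simp only [strip, sig, Set.mem_ofPred_eq, Set.mem_Icc, abs_le]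
    constructor <;> rintro ⟨h1, h2⟩ <;> constructor <;> linarith
  rw [this, Real.volume_Icc, show ((k : ℝ) ^ (2 * j + 1) + 2 * 2 ^ l
    - ((k : ℝ) ^ (2 * j + 1) - 2 * 2 ^ l)) = 4 * 2 ^ l by ring,
    ENNReal.ofReal_mul (by norm_num), ENNReal.ofReal_pow (by norm_num)]
  norm_num

lemma eq_zero_of_notMem_strip {j l : ℕ} {f : ℤ → ℝ → ℝ≥0∞}
    (hf : ∀ k τ, jap (sig j k τ) ∉ Set.Ico ((2 : ℝ) ^ l) ((2 : ℝ) ^ (l + 1)) → f k τ = 0)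
    {k : ℤ} {τ : ℝ} (h : τ ∉ strip j l k) : f k τ = 0 := by
  refine hf k τ fun hm => h ?_
  have h1 : |sig j k τ| ≤ jap (sig j k τ) := by
    unfold jap
    rw [← Real.sqrt_sq_eq_abs]
    exact Real.sqrt_le_sqrt (by linarith)
  have h2 := hm.2
  rw [pow_succ] at h2
  simp only [strip, Set.mem_ofPred_eq]
  linarith

/-- There are at most `2 R + 1 ≤ 3 R` integers `k` with `|k| ≤ R`. -/
lemma tsum_low {R : ℝ} (hR : 1 ≤ R) (c : ℝ≥0∞) :
    ∑' k : ℤ, (if |(k : ℝ)| ≤ R then c else 0) ≤ 3 * ENNReal.ofReal R * c := by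
  have hR0 : 0 ≤ R := by linarith
  have h0 := Int.floor_nonneg.2 hR0
  have hsub : ∀ k : ℤ, k ∉ Finset.Icc (-⌊R⌋) ⌊R⌋ → (if |(k : ℝ)| ≤ R then c else 0) = 0 := by
    intro k hk
    rw [if_neg]
    intro h
    apply hk
    have := Int.le_floor.2 (by simpa using h : ((|k| : ℤ) : ℝ) ≤ R)
    rw [Finset.mem_Icc]
    exact abs_le.1 this
  rw [tsum_eq_sum hsub]
  have hcard : ((Finset.Icc (-⌊R⌋) ⌊R⌋).card : ℝ) ≤ 3 * R := by
    have : ((Finset.Icc (-⌊R⌋) ⌊R⌋).card : ℤ) = 2 * ⌊R⌋ + 1 := by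
      rw [Int.card_Icc]; omega
    have h2 : ((Finset.Icc (-⌊R⌋) ⌊R⌋).card : ℝ) = 2 * ⌊R⌋ + 1 := by exact_mod_cast this
    rw [h2]
    linarith [Int.floor_le R]
  calc _ ≤ ∑ k ∈ Finset.Icc (-⌊R⌋) ⌊R⌋, c := Finset.sum_le_sum fun k _ => by split_ifs <;> simp
    _ = ((Finset.Icc (-⌊R⌋) ⌊R⌋).card : ℝ≥0∞) * c := by rw [Finset.sum_const, nsmul_eq_mul]
    _ ≤ 3 * ENNReal.ofReal R * c := by
      gcongr
      rw [← ENNReal.ofReal_natCast, show (3 : ℝ≥0∞) = ENNReal.ofReal 3 by simp,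
        ← ENNReal.ofReal_mul (by norm_num)]
      exact ENNReal.ofReal_le_ofReal hcard

/-! ### Low and high output frequencies -/

/-- Cauchy–Schwarz with the factors `f₁` and `1_{strip} f₂`; only the strip of `f₁` is used, so no
counting of frequencies is needed. -/
lemma conv_sq_le_low {j l₁ : ℕ} {f₁ f₂ : ℤ → ℝ → ℝ≥0∞} (hf₁ : ∀ k, Measurable (f₁ k))
    (hf₂ : ∀ k, Measurable (f₂ k)) (hs₁ : ∀ k τ, τ ∉ strip j l₁ k → f₁ k τ = 0) (k : ℤ) (τ : ℝ) :
    conv f₁ f₂ k τ ^ 2 ≤ (∑' k, ∫⁻ τ, f₁ k τ ^ 2) *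
      ∑' k₁, ∫⁻ τ₁, (strip j l₁ k₁).indicator 1 τ₁ * f₂ (k - k₁) (τ - τ₁) ^ 2 := by
  refine (pow_le_pow_left' (conv_le f₁ f₂ k τ) 2).trans ?_
  have h := tsum_lintegral_cauchy_schwarz (F := f₁)
    (G := fun k₁ τ₁ => (strip j l₁ k₁).indicator 1 τ₁ * f₂ (k - k₁) (τ - τ₁)) hf₁
    (fun k₁ => (measurable_one.indicator (measurableSet_strip j l₁ k₁)).mul
      ((hf₂ (k - k₁)).comp (measurable_id.const_sub τ)))
  refine le_trans (le_of_eq ?_) (h.trans (le_of_eq ?_))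
  · congr 1
    refine tsum_congr fun k₁ => lintegral_congr fun τ₁ => ?_
    by_cases hm : τ₁ ∈ strip j l₁ k₁
    · simp [hm]
    · simp [hs₁ _ _ hm]
  · congr 1
    refine tsum_congr fun k₁ => lintegral_congr fun τ₁ => ?_
    by_cases hm : τ₁ ∈ strip j l₁ k₁ <;> simp [hm]

lemma lintegral_conv_sq_le_low {j l₁ : ℕ} {f₁ f₂ : ℤ → ℝ → ℝ≥0∞} (hf₁ : ∀ k, Measurable (f₁ k))
    (hf₂ : ∀ k, Measurable (f₂ k)) (hs₁ : ∀ k τ, τ ∉ strip j l₁ k → f₁ k τ = 0) (k : ℤ) :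
    ∫⁻ τ, conv f₁ f₂ k τ ^ 2 ≤
      4 * 2 ^ l₁ * ((∑' k, ∫⁻ τ, f₁ k τ ^ 2) * ∑' k, ∫⁻ τ, f₂ k τ ^ 2) := by
  refine (lintegral_mono fun τ => conv_sq_le_low hf₁ hf₂ hs₁ k τ).trans ?_
  have hu : ∀ k, Measurable ((strip j l₁ k).indicator (1 : ℝ → ℝ≥0∞)) :=
    fun k => measurable_one.indicator (measurableSet_strip j l₁ k)
  have hv : ∀ k, Measurable fun τ => f₂ k τ ^ 2 := fun k => (hf₂ k).pow_const 2
  rw [lintegral_const_mul _ (measurable_tsum_convolution hu hv k),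
    lintegral_tsum_convolution hu hv k]
  simp_rw [lintegral_indicator_one (measurableSet_strip j l₁ _), volume_strip]
  have hshift : ∑' k₁, ∫⁻ τ, f₂ (k - k₁) τ ^ 2 = ∑' m, ∫⁻ τ, f₂ m τ ^ 2 :=
    (Equiv.subLeft k).tsum_eq (fun m => ∫⁻ τ, f₂ m τ ^ 2)
  rw [ENNReal.tsum_mul_left, hshift]
  exact le_of_eq (by ring)

/-- Cauchy–Schwarz with the factors `f₁ f₂` and the indicator of the interaction set, whose measure
is at most the number of admissible `k₁` times the width `4 * 2 ^ l₁` of the thinner strip. -/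
lemma conv_sq_le_high {j l₁ l₂ : ℕ} (hj : 1 ≤ j) (hl : l₁ ≤ l₂) {R : ℝ} (hR : 1 ≤ R)
    (hRl : R ^ (2 * j + 1) = 2 ^ l₂) {f₁ f₂ : ℤ → ℝ → ℝ≥0∞} (hf₁ : ∀ k, Measurable (f₁ k))
    (hf₂ : ∀ k, Measurable (f₂ k)) (hs₁ : ∀ k τ, τ ∉ strip j l₁ k → f₁ k τ = 0)
    (hs₂ : ∀ k τ, τ ∉ strip j l₂ k → f₂ k τ = 0) {k : ℤ} (hk : R < |(k : ℝ)|) (τ : ℝ) :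
    conv f₁ f₂ k τ ^ 2 ≤ 18 * ENNReal.ofReal R * (4 * 2 ^ l₁) *
      ∑' k₁, ∫⁻ τ₁, f₁ k₁ τ₁ ^ 2 * f₂ (k - k₁) (τ - τ₁) ^ 2 := by
  refine (pow_le_pow_left' (conv_le f₁ f₂ k τ) 2).trans ?_
  set E : ℤ → Set ℝ := fun k₁ => strip j l₁ k₁ ∩ (fun τ₁ => τ - τ₁) ⁻¹' strip j l₂ (k - k₁) with hE
  have hEm : ∀ k₁, MeasurableSet (E k₁) := fun k₁ =>
    (measurableSet_strip j l₁ k₁).inter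
      ((measurable_id.const_sub τ) (measurableSet_strip j l₂ (k - k₁)))
  have h := tsum_lintegral_cauchy_schwarz
    (F := fun k₁ τ₁ => f₁ k₁ τ₁ * f₂ (k - k₁) (τ - τ₁)) (G := fun k₁ => (E k₁).indicator 1)
    (fun k₁ => (hf₁ k₁).mul ((hf₂ (k - k₁)).comp (measurable_id.const_sub τ)))
    (fun k₁ => measurable_one.indicator (hEm k₁))
  have hG : ∑' k₁, ∫⁻ τ₁, (E k₁).indicator (1 : ℝ → ℝ≥0∞) τ₁ ^ 2 ≤
      18 * ENNReal.ofReal R * (4 * 2 ^ l₁) := by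
    have e : ∀ k₁, ∫⁻ τ₁, (E k₁).indicator (1 : ℝ → ℝ≥0∞) τ₁ ^ 2 = volume (E k₁) := by
      intro k₁
      rw [← lintegral_indicator_one (hEm k₁)]
      refine lintegral_congr fun τ₁ => ?_
      by_cases hm : τ₁ ∈ E k₁ <;> simp [hm]
    simp_rw [e]
    obtain ⟨t, ht, hcard⟩ := count_bound j hj hR hk τ
    -- A fibre over `k₁` can only be non-empty if `k₁` is one of the counted frequencies.
    have hempty : ∀ k₁ ∉ t, volume (E k₁) = 0 := by
      intro k₁ hk₁
      rw [Set.eq_empty_of_forall_notMem (s := E k₁), measure_empty]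
      rintro τ₁ ⟨h1, h2⟩
      refine hk₁ (ht ?_)
      simp only [strip, sig, Set.mem_ofPred_eq, Set.mem_preimage] at h1 h2 ⊢
      have h3 : (2 : ℝ) ^ l₁ ≤ 2 ^ l₂ := pow_le_pow_right₀ (by norm_num) hl
      rw [hRl]
      rw [abs_le] at *
      constructor <;> linarith
    rw [tsum_eq_sum hempty]
    calc ∑ k₁ ∈ t, volume (E k₁) ≤ ∑ k₁ ∈ t, 4 * 2 ^ l₁ :=
          Finset.sum_le_sum fun k₁ _ =>
            (measure_mono Set.inter_subset_left).trans (volume_strip j l₁ k₁).le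
      _ = (t.card : ℝ≥0∞) * (4 * 2 ^ l₁) := by rw [Finset.sum_const, nsmul_eq_mul]
      _ ≤ _ := by
        gcongr
        rw [← ENNReal.ofReal_natCast, show (18 : ℝ≥0∞) = ENNReal.ofReal 18 by simp,
          ← ENNReal.ofReal_mul (by norm_num)]
        exact ENNReal.ofReal_le_ofReal hcard
  have hFG : ∑' k₁, ∫⁻ τ₁, f₁ k₁ τ₁ * f₂ (k - k₁) (τ - τ₁) =
      ∑' k₁, ∫⁻ τ₁, f₁ k₁ τ₁ * f₂ (k - k₁) (τ - τ₁) * (E k₁).indicator 1 τ₁ := by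
    refine tsum_congr fun k₁ => lintegral_congr fun τ₁ => ?_
    by_cases h1 : τ₁ ∈ strip j l₁ k₁
    · by_cases h2 : τ - τ₁ ∈ strip j l₂ (k - k₁)
      · simp [hE, h1, h2]
      · simp [hs₂ _ _ h2]
    · simp [hs₁ _ _ h1]
  rw [hFG]
  refine h.trans ?_
  rw [mul_comm]
  simp_rw [mul_pow]
  gcongr

lemma lintegral_conv_sq_le_high {j l₁ l₂ : ℕ} (hj : 1 ≤ j) (hl : l₁ ≤ l₂) {R : ℝ} (hR : 1 ≤ R)
    (hRl : R ^ (2 * j + 1) = 2 ^ l₂) {f₁ f₂ : ℤ → ℝ → ℝ≥0∞} (hf₁ : ∀ k, Measurable (f₁ k))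
    (hf₂ : ∀ k, Measurable (f₂ k)) (hs₁ : ∀ k τ, τ ∉ strip j l₁ k → f₁ k τ = 0)
    (hs₂ : ∀ k τ, τ ∉ strip j l₂ k → f₂ k τ = 0) {k : ℤ} (hk : R < |(k : ℝ)|) :
    ∫⁻ τ, conv f₁ f₂ k τ ^ 2 ≤ 18 * ENNReal.ofReal R * (4 * 2 ^ l₁) *
      ∑' k₁, (∫⁻ τ, f₁ k₁ τ ^ 2) * ∫⁻ τ, f₂ (k - k₁) τ ^ 2 := by
  refine (lintegral_mono fun τ =>
    conv_sq_le_high hj hl hR hRl hf₁ hf₂ hs₁ hs₂ hk τ).trans ?_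
  have hu : ∀ k, Measurable fun τ => f₁ k τ ^ 2 := fun k => (hf₁ k).pow_const 2
  have hv : ∀ k, Measurable fun τ => f₂ k τ ^ 2 := fun k => (hf₂ k).pow_const 2
  rw [lintegral_const_mul _ (measurable_tsum_convolution hu hv k),
    lintegral_tsum_convolution hu hv k]

/-- The squared estimate when `f₁` has the smaller modulation, with `R` standing for
`(2 ^ l₂) ^ (1 / (2 j + 1))`: the bounds for `|k| ≤ R` and `|k| > R` are summed over `k`. -/
lemma tsum_lintegral_conv_sq_le {j l₁ l₂ : ℕ} (hj : 1 ≤ j) (hl : l₁ ≤ l₂) {R : ℝ} (hR : 1 ≤ R)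
    (hRl : R ^ (2 * j + 1) = 2 ^ l₂) {f₁ f₂ : ℤ → ℝ → ℝ≥0∞} (hf₁ : ∀ k, Measurable (f₁ k))
    (hf₂ : ∀ k, Measurable (f₂ k)) (hs₁ : ∀ k τ, τ ∉ strip j l₁ k → f₁ k τ = 0)
    (hs₂ : ∀ k τ, τ ∉ strip j l₂ k → f₂ k τ = 0) :
    ∑' k, ∫⁻ τ, conv f₁ f₂ k τ ^ 2 ≤ 10 ^ 2 * 2 ^ l₁ * ENNReal.ofReal R *
      (∑' k, ∫⁻ τ, f₁ k τ ^ 2) * ∑' k, ∫⁻ τ, f₂ k τ ^ 2 := by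
  set A := ∑' k, ∫⁻ τ, f₁ k τ ^ 2 with hA
  set B := ∑' k, ∫⁻ τ, f₂ k τ ^ 2 with hB
  have hAB : ∑' k : ℤ, ∑' k₁, (∫⁻ τ, f₁ k₁ τ ^ 2) * ∫⁻ τ, f₂ (k - k₁) τ ^ 2 = A * B := by
    rw [ENNReal.tsum_comm]
    have : ∀ k₁ : ℤ, ∑' k : ℤ, (∫⁻ τ, f₁ k₁ τ ^ 2) * ∫⁻ τ, f₂ (k - k₁) τ ^ 2 =
        (∫⁻ τ, f₁ k₁ τ ^ 2) * B := by
      intro k₁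
      have hshift : ∑' k, ∫⁻ τ, f₂ (k - k₁) τ ^ 2 = B :=
        (Equiv.subRight k₁).tsum_eq (fun m => ∫⁻ τ, f₂ m τ ^ 2)
      rw [ENNReal.tsum_mul_left, hshift]
    simp_rw [this]
    rw [ENNReal.tsum_mul_right]
  calc ∑' k, ∫⁻ τ, conv f₁ f₂ k τ ^ 2
      ≤ ∑' k : ℤ, ((if |(k : ℝ)| ≤ R then 4 * 2 ^ l₁ * (A * B) else 0) +
          18 * ENNReal.ofReal R * (4 * 2 ^ l₁) *
            ∑' k₁, (∫⁻ τ, f₁ k₁ τ ^ 2) * ∫⁻ τ, f₂ (k - k₁) τ ^ 2) := by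
        refine ENNReal.tsum_le_tsum fun k => ?_
        split_ifs with hk
        · exact (lintegral_conv_sq_le_low hf₁ hf₂ hs₁ k).trans le_self_add
        · exact (lintegral_conv_sq_le_high hj hl hR hRl hf₁ hf₂ hs₁ hs₂ (not_le.1 hk)).trans
            le_add_self
    _ ≤ 3 * ENNReal.ofReal R * (4 * 2 ^ l₁ * (A * B)) +
          18 * ENNReal.ofReal R * (4 * 2 ^ l₁) * (A * B) := by
        rw [ENNReal.tsum_add, ENNReal.tsum_mul_left, hAB]
        gcongr
        exact tsum_low hR _
    _ = 84 * (2 ^ l₁ * ENNReal.ofReal R * A * B) := by ring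
    _ ≤ 10 ^ 2 * (2 ^ l₁ * ENNReal.ofReal R * A * B) := by gcongr; norm_num
    _ = _ := by ring

lemma l2L2_conv_le {j l₁ l₂ : ℕ} (hj : 1 ≤ j) (hl : l₁ ≤ l₂) {f₁ f₂ : ℤ → ℝ → ℝ≥0∞}
    (hf₁ : Measurable (Function.uncurry f₁)) (hf₂ : Measurable (Function.uncurry f₂))
    (hs₁ : ∀ k τ, jap (sig j k τ) ∉ Set.Ico ((2 : ℝ) ^ l₁) ((2 : ℝ) ^ (l₁ + 1)) → f₁ k τ = 0)
    (hs₂ : ∀ k τ, jap (sig j k τ) ∉ Set.Ico ((2 : ℝ) ^ l₂) ((2 : ℝ) ^ (l₂ + 1)) → f₂ k τ = 0) :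
    l2L2 (conv f₁ f₂) ≤
      ENNReal.ofReal 10 * ((2 : ℝ≥0∞) ^ l₁) ^ (1 / 2 : ℝ)
        * ((2 : ℝ≥0∞) ^ l₂) ^ (1 / (2 * (2 * (j : ℝ) + 1))) * l2L2 f₁ * l2L2 f₂ := by
  have hj0 : (0 : ℝ) < 2 * (j : ℝ) + 1 := by positivity
  set R : ℝ := ((2 : ℝ) ^ l₂) ^ (1 / (2 * (j : ℝ) + 1)) with hRdef
  have hR : 1 ≤ R := Real.one_le_rpow (one_le_pow₀ (by norm_num)) (by positivity)
  have hRl : R ^ (2 * j + 1) = 2 ^ l₂ := by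
    rw [← Real.rpow_natCast R, hRdef, ← Real.rpow_mul (by positivity)]
    push_cast
    rw [one_div_mul_cancel hj0.ne', Real.rpow_one]
  have hRE : ENNReal.ofReal R = ((2 : ℝ≥0∞) ^ l₂) ^ (1 / (2 * (j : ℝ) + 1)) := by
    rw [hRdef, ← ENNReal.ofReal_rpow_of_pos (by positivity), ENNReal.ofReal_pow (by norm_num)]
    norm_num
  have h := tsum_lintegral_conv_sq_le hj hl hR hRl (fun k => hf₁.of_uncurry_left)
    (fun k => hf₂.of_uncurry_left) (fun k τ => eq_zero_of_notMem_strip hs₁)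
    (fun k τ => eq_zero_of_notMem_strip hs₂)
  have h2 := ENNReal.rpow_le_rpow h (show (0 : ℝ) ≤ 1 / 2 by norm_num)
  rw [ENNReal.mul_rpow_of_nonneg _ _ (by norm_num), ENNReal.mul_rpow_of_nonneg _ _ (by norm_num),
    ENNReal.mul_rpow_of_nonneg _ _ (by norm_num), ENNReal.mul_rpow_of_nonneg _ _ (by norm_num),
    hRE, ← ENNReal.rpow_mul, ← ENNReal.rpow_two, ← ENNReal.rpow_mul] at h2
  unfold l2L2
  convert h2 using 5
  · norm_num
  · field_simp

/-- **Lemma 2.1 (dyadic bilinear Strichartz estimate).** -/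
theorem stmt_3 (j : ℕ) (hj : 1 ≤ j) :
    ∃ C : ℝ, 0 < C ∧ ∀ (l₁ l₂ : ℕ) (f₁ f₂ : ℤ → ℝ → ℝ≥0∞),
      Measurable (Function.uncurry f₁) → Measurable (Function.uncurry f₂) →
      (∀ τ, f₁ 0 τ = 0) → (∀ τ, f₂ 0 τ = 0) →
      (∀ k τ, jap (sig j k τ) ∉ Set.Ico ((2 : ℝ) ^ l₁) ((2 : ℝ) ^ (l₁ + 1)) → f₁ k τ = 0) →
      (∀ k τ, jap (sig j k τ) ∉ Set.Ico ((2 : ℝ) ^ l₂) ((2 : ℝ) ^ (l₂ + 1)) → f₂ k τ = 0) →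
      l2L2 (conv f₁ f₂) ≤
        ENNReal.ofReal C * (min ((2 : ℝ≥0∞) ^ l₁) ((2 : ℝ≥0∞) ^ l₂)) ^ (1 / 2 : ℝ)
          * (max ((2 : ℝ≥0∞) ^ l₁) ((2 : ℝ≥0∞) ^ l₂)) ^ (1 / (2 * (2 * (j : ℝ) + 1)))
          * l2L2 f₁ * l2L2 f₂ := by
  refine ⟨10, by norm_num, fun l₁ l₂ f₁ f₂ hf₁ hf₂ _ _ hs₁ hs₂ => ?_⟩
  have hmono : ∀ {a b : ℕ}, a ≤ b → (2 : ℝ≥0∞) ^ a ≤ 2 ^ b :=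
    fun h => pow_le_pow_right₀ (by norm_num) h
  rcases le_total l₁ l₂ with hl | hl
  · rw [min_eq_left (hmono hl), max_eq_right (hmono hl)]
    exact l2L2_conv_le hj hl hf₁ hf₂ hs₁ hs₂
  · rw [min_eq_right (hmono hl), max_eq_left (hmono hl), conv_comm, mul_right_comm]
    exact l2L2_conv_le hj hl hf₂ hf₁ hs₂ hs₁

end
end

section
/- Let a, b ∈ ℝ satisfy a + b ≥ (j+1)/(2j+1) and min{a, b} > 1/(2(2j+1)). Then there exists a constant C > 0 depending only on j, a, b such that for all nonnegative measurable f, g : Ż × ℝ → [0,∞], (Σ_{k∈ℤ} ∫_ℝ (f∗g)(k,τ)² dτ)^{1/2} ≤ C·‖⟨σ⟩^a f‖_{ℓ²L²}·‖⟨σ⟩^b g‖_{ℓ²L²}. -/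
/-!
The proof is a dyadic decomposition in the modulation. Write `p = 2j + 1` and let `f_m`, `g_n` be
the restrictions of `f` and `g` to `⟨σ⟩ ~ 2^m` and `⟨σ⟩ ~ 2^n`. The heart of the matter is the
localized bound (`localized`)
`‖f_m ∗ g_n‖² ≤ C 2^{min(m,n)} 2^{max(m,n)/p} ‖f_m‖² ‖g_n‖²`.
Put `R = 2^{max(m,n)/p}`.

* For output frequencies `|k| ≥ R` (`localized_high`), Cauchy–Schwarz reduces the bound to the
  measure of the set of `(k₁, τ₁)` allowed by the two modulation constraints. Each `k₁` contributes
  at most `O(2^{min(m,n)})`, and only those `k₁` contribute for which `k₁^p + (k - k₁)^p` lies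
  within `O(R^p)` of `τ`. In the variable `Y = 2k₁ - k` this phase is, up to the factor `2^p`, equal
  to `(k + Y)^p + (k - Y)^p`, which as a function of `Y²` grows at rate at least `2|k|^{p-2}`
  (`phase_gap`), so there are `O(R)` such `k₁` (`phase_count`).
* For a single frequency `k`, including the degenerate `k = 0`, Minkowski in `k₁` and
  Cauchy–Schwarz give the factor `2^{min(m,n)}` alone (`localized_slice`), and there are only `O(R)`
  frequencies with `|k| < R` (`localized_low`).

Inserting the weights, the hypothesis `a + b ≥ (p+1)/(2p)` makes the resulting kernel bounded along
the diagonal `m = n`, and `min(a, b) > 1/(2p)` makes it decay geometrically in `|m - n|`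
(`exponent_le`). Schur's test on `ℕ × ℕ` (`schur`) then sums the pieces, with no loss at the
endpoint. Throughout, `f ∗ g` is bounded by the full convolution on `ℤ × ℝ` (`conv_le_cv`).
-/

open MeasureTheory
open scoped ENNReal

noncomputable section

/-- Modulation weight `⟨σ⟩^b f`. -/
def wt (j : ℕ) (b : ℝ) (f : ℤ → ℝ → ℝ≥0∞) : ℤ → ℝ → ℝ≥0∞ :=
  fun k τ => ENNReal.ofReal (jap (sig j k τ) ^ b) * f k τ

/-! ### `L²` norms and convolutions of nonnegative functions -/

/-- The `L²` norm of a nonnegative function on a measure space. -/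
def nrm {α : Type*} [MeasurableSpace α] (μ : Measure α) (F : α → ℝ≥0∞) : ℝ≥0∞ :=
  (∫⁻ x, F x ^ 2 ∂μ) ^ (1 / 2 : ℝ)

lemma sq_rpow_half (x : ℝ≥0∞) : (x ^ 2) ^ (1 / 2 : ℝ) = x := by
  rw [← ENNReal.rpow_natCast, ← ENNReal.rpow_mul]; norm_num

lemma rpow_half_sq (x : ℝ≥0∞) : (x ^ (1 / 2 : ℝ)) ^ 2 = x := by
  rw [← ENNReal.rpow_natCast, ← ENNReal.rpow_mul]; norm_num

lemma nrm_sq {α : Type*} [MeasurableSpace α] (μ : Measure α) (F : α → ℝ≥0∞) :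
    nrm μ F ^ 2 = ∫⁻ x, F x ^ 2 ∂μ := rpow_half_sq _

lemma nrm_mono {α : Type*} [MeasurableSpace α] {μ : Measure α} {F G : α → ℝ≥0∞}
    (h : ∀ x, F x ≤ G x) : nrm μ F ≤ nrm μ G := by
  unfold nrm
  gcongr with x
  exact h x

lemma nrm_const_mul {α : Type*} [MeasurableSpace α] {μ : Measure α} (c : ℝ≥0∞) {F : α → ℝ≥0∞}
    (hF : Measurable F) : nrm μ (fun x => c * F x) = c * nrm μ F := by
  unfold nrm
  simp_rw [mul_pow]
  rw [lintegral_const_mul _ (by fun_prop), ENNReal.mul_rpow_of_nonneg _ _ (by norm_num),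
    sq_rpow_half]

lemma le_of_sq_le {x y : ℝ≥0∞} (h : x ^ 2 ≤ y ^ 2) : x ≤ y := by
  rw [← sq_rpow_half x, ← sq_rpow_half y]
  gcongr

lemma lintegral_mul_le_nrm {α : Type*} [MeasurableSpace α] (μ : Measure α) {F G : α → ℝ≥0∞}
    (hF : Measurable F) (hG : Measurable G) :
    ∫⁻ x, F x * G x ∂μ ≤ nrm μ F * nrm μ G := by
  have := ENNReal.lintegral_mul_le_Lp_mul_Lq μ Real.HolderConjugate.two_two
    hF.aemeasurable hG.aemeasurable
  simpa [nrm] using this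

lemma tsum_mul_le {ι : Type*} (x y : ι → ℝ≥0∞) :
    ∑' i, x i * y i ≤ (∑' i, x i ^ 2) ^ (1 / 2 : ℝ) * (∑' i, y i ^ 2) ^ (1 / 2 : ℝ) := by
  let _ : MeasurableSpace ι := ⊤
  have := lintegral_mul_le_nrm (Measure.count : Measure ι) (F := x) (G := y)
    measurable_from_top measurable_from_top
  simpa [nrm, lintegral_count] using this

/-- Minkowski's inequality for countable sums in `L²`, obtained by expanding the square of the sum
and applying Cauchy–Schwarz to each product. -/
lemma nrm_tsum_le {α ι : Type*} [MeasurableSpace α] [Countable ι] (μ : Measure α)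
    {F : ι → α → ℝ≥0∞} (hF : ∀ i, Measurable (F i)) :
    nrm μ (fun x => ∑' i, F i x) ≤ ∑' i, nrm μ (F i) := by
  apply le_of_sq_le
  rw [nrm_sq]
  have h1 : ∀ x, (∑' i, F i x) ^ 2 = ∑' i, ∑' l, F i x * F l x := by
    intro x
    rw [sq, ← ENNReal.tsum_mul_right]
    simp_rw [ENNReal.tsum_mul_left]
  simp_rw [h1]
  rw [lintegral_tsum (f := fun i x => ∑' l, F i x * F l x)
    fun i => (Measurable.tsum fun l => (hF i).mul (hF l)).aemeasurable]
  rw [sq, ← ENNReal.tsum_mul_right]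
  refine ENNReal.tsum_le_tsum fun i => ?_
  rw [lintegral_tsum (f := fun l x => F i x * F l x)
    fun l => ((hF i).mul (hF l)).aemeasurable, ← ENNReal.tsum_mul_left]
  exact ENNReal.tsum_le_tsum fun l => lintegral_mul_le_nrm μ (hF i) (hF l)

/-- Convolution on an abelian group with respect to the measure `μ`. -/
def cv {A : Type*} [AddCommGroup A] [MeasurableSpace A] (μ : Measure A) (F G : A → ℝ≥0∞) (z : A) :
    ℝ≥0∞ := ∫⁻ w, F w * G (z - w) ∂μ

lemma measurable_cv {A : Type*} [AddCommGroup A] [MeasurableSpace A] [MeasurableSub₂ A]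
    {μ : Measure A} [SFinite μ] {F G : A → ℝ≥0∞} (hF : Measurable F) (hG : Measurable G) :
    Measurable (cv μ F G) := by
  unfold cv
  apply Measurable.lintegral_prod_right'
    (f := fun p : A × A => F p.2 * G (p.1 - p.2))
  fun_prop

/-- Cauchy–Schwarz in the convolution integral: over the set of `z` for which the overlap of
`supp F` and `z - supp G` has measure at most `B`, the square of `F ∗ G` has integral at most
`B ‖F‖² ‖G‖²`. -/
lemma lintegral_cv_sq_le {A : Type*} [AddCommGroup A] [MeasurableSpace A] [MeasurableSub₂ A]
    [MeasurableAdd A] {μ : Measure A} [SFinite μ] [μ.IsAddRightInvariant]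
    {F G : A → ℝ≥0∞} (hF : Measurable F) (hG : Measurable G) {E : Set A} (hE : MeasurableSet E)
    {B : ℝ≥0∞} (hB : ∀ z ∈ E, μ {w | F w ≠ 0 ∧ G (z - w) ≠ 0} ≤ B) :
    ∫⁻ z in E, cv μ F G z ^ 2 ∂μ ≤ B * (∫⁻ w, F w ^ 2 ∂μ) * ∫⁻ w, G w ^ 2 ∂μ := by
  have hpt : ∀ z ∈ E, cv μ F G z ^ 2 ≤ B * ∫⁻ w, F w ^ 2 * G (z - w) ^ 2 ∂μ := by
    intro z hz
    set S : Set A := {w | F w ≠ 0 ∧ G (z - w) ≠ 0} with hS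
    have hGz : Measurable fun w => G (z - w) := by fun_prop
    have hSm : MeasurableSet S :=
      (hF (measurableSet_singleton 0).compl).inter (hGz (measurableSet_singleton 0).compl)
    -- inserting the indicator of the overlap lets Cauchy–Schwarz produce the factor `μ S`
    have h1 : cv μ F G z = ∫⁻ w, S.indicator 1 w * (F w * G (z - w)) ∂μ := by
      unfold cv
      congr 1 with w
      by_cases hw : w ∈ S
      · simp [hw]
      · have : F w * G (z - w) = 0 := by
          rw [hS, Set.mem_ofPred_eq, not_and_or, not_not, not_not] at hw
          rcases hw with h | h <;> simp [h]
        simp [hw, this]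
    have h2 := lintegral_mul_le_nrm μ (F := S.indicator 1) (G := fun w => F w * G (z - w))
      (measurable_one.indicator hSm) (hF.mul hGz)
    rw [← h1] at h2
    calc cv μ F G z ^ 2
        ≤ (nrm μ (S.indicator 1) * nrm μ fun w => F w * G (z - w)) ^ 2 := by gcongr
      _ = μ S * ∫⁻ w, F w ^ 2 * G (z - w) ^ 2 ∂μ := by
        rw [mul_pow, nrm_sq, nrm_sq]
        simp_rw [mul_pow]
        congr 1
        rw [← lintegral_indicator_one hSm]
        congr 1 with w
        by_cases hw : w ∈ S <;> simp [hw]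
      _ ≤ _ := by gcongr; exact hB z hz
  calc ∫⁻ z in E, cv μ F G z ^ 2 ∂μ
      ≤ ∫⁻ z in E, B * ∫⁻ w, F w ^ 2 * G (z - w) ^ 2 ∂μ ∂μ :=
        setLIntegral_mono' hE hpt
    _ ≤ ∫⁻ z, B * ∫⁻ w, F w ^ 2 * G (z - w) ^ 2 ∂μ ∂μ := setLIntegral_le_lintegral _ _
    _ = B * ∫⁻ z, ∫⁻ w, F w ^ 2 * G (z - w) ^ 2 ∂μ ∂μ := by
        rw [lintegral_const_mul]
        apply Measurable.lintegral_prod_right'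
          (f := fun p : A × A => F p.2 ^ 2 * G (p.1 - p.2) ^ 2)
        fun_prop
    _ = B * ∫⁻ w, ∫⁻ z, F w ^ 2 * G (z - w) ^ 2 ∂μ ∂μ := by
        rw [lintegral_lintegral_swap]
        apply Measurable.aemeasurable
        unfold Function.uncurry
        fun_prop
    _ = B * ∫⁻ w, F w ^ 2 * ∫⁻ z, G z ^ 2 ∂μ ∂μ := by
        congr 2 with w
        rw [lintegral_const_mul _ (by fun_prop),
          lintegral_sub_right_eq_self (fun z => G z ^ 2) w]
    _ = _ := by
        rw [lintegral_mul_const _ (by fun_prop), mul_assoc]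

/-! ### The phase `k₁^p + (k - k₁)^p` -/

/-- Let `A_i(y) = (κ+y)^{2i+1} + (κ-y)^{2i+1}` and
`B_i(y) = y ((κ+y)^{2i+1} - (κ-y)^{2i+1})`. The recurrences
`A_{i+1} = (κ²+y²) A_i + 2κ B_i` and `B_{i+1} = (κ²+y²) B_i + 2κ y² A_i` have nonnegative
coefficients for `κ > 0`, so both sequences are nonnegative and nondecreasing in `y²`. -/
lemma phase_mono {κ Y Z : ℝ} (hκ : 0 < κ) (h : Z ^ 2 ≤ Y ^ 2) (i : ℕ) :
    2 * κ ^ (2 * i + 1) ≤ (κ + Z) ^ (2 * i + 1) + (κ - Z) ^ (2 * i + 1) ∧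
    0 ≤ Z * ((κ + Z) ^ (2 * i + 1) - (κ - Z) ^ (2 * i + 1)) ∧
    (κ + Z) ^ (2 * i + 1) + (κ - Z) ^ (2 * i + 1) ≤
      (κ + Y) ^ (2 * i + 1) + (κ - Y) ^ (2 * i + 1) ∧
    Z * ((κ + Z) ^ (2 * i + 1) - (κ - Z) ^ (2 * i + 1)) ≤
      Y * ((κ + Y) ^ (2 * i + 1) - (κ - Y) ^ (2 * i + 1)) := by
  induction i with
  | zero =>
    refine ⟨?_, ?_, ?_, ?_⟩ <;> ring_nf <;> nlinarith [sq_nonneg Z]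
  | succ i ih =>
    have hA : ∀ y : ℝ, (κ + y) ^ (2 * (i + 1) + 1) + (κ - y) ^ (2 * (i + 1) + 1) =
        (κ ^ 2 + y ^ 2) * ((κ + y) ^ (2 * i + 1) + (κ - y) ^ (2 * i + 1)) +
        2 * κ * (y * ((κ + y) ^ (2 * i + 1) - (κ - y) ^ (2 * i + 1))) := by intro y; ring
    have hB : ∀ y : ℝ, y * ((κ + y) ^ (2 * (i + 1) + 1) - (κ - y) ^ (2 * (i + 1) + 1)) =
        (κ ^ 2 + y ^ 2) * (y * ((κ + y) ^ (2 * i + 1) - (κ - y) ^ (2 * i + 1))) +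
        2 * κ * (y ^ 2 * ((κ + y) ^ (2 * i + 1) + (κ - y) ^ (2 * i + 1))) := by intro y; ring
    have hpow : κ ^ (2 * (i + 1) + 1) = κ ^ 2 * κ ^ (2 * i + 1) := by ring
    have hκp : 0 < κ ^ (2 * i + 1) := by positivity
    rw [hA Y, hA Z, hB Y, hB Z, hpow]
    generalize (κ + Z) ^ (2 * i + 1) + (κ - Z) ^ (2 * i + 1) = a at *
    generalize Z * ((κ + Z) ^ (2 * i + 1) - (κ - Z) ^ (2 * i + 1)) = b at *
    generalize (κ + Y) ^ (2 * i + 1) + (κ - Y) ^ (2 * i + 1) = a' at *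
    generalize Y * ((κ + Y) ^ (2 * i + 1) - (κ - Y) ^ (2 * i + 1)) = b' at *
    generalize κ ^ (2 * i + 1) = q at *
    obtain ⟨h1, h2, h3, h4⟩ := ih
    have ha : 0 ≤ a := by linarith
    refine ⟨?_, by positivity, by gcongr, by gcongr⟩
    have : κ ^ 2 * (2 * q) ≤ κ ^ 2 * a := by gcongr
    have : 0 ≤ Z ^ 2 * a := by positivity
    have : 0 ≤ 2 * κ * b := by positivity
    linarith

/-- In `A_{i+1} = (κ²+y²) A_i + 2κ B_i`, the monotone terms can be dropped and the difference of
the factors `κ²+y²`, multiplied by `A_i ≥ 2κ^{2i+1}`, gives the lower bound. -/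
lemma phase_gap_pos {κ Y Z : ℝ} (hκ : 0 < κ) (h : Z ^ 2 ≤ Y ^ 2) (i : ℕ) :
    2 * κ ^ (2 * i + 1) * (Y ^ 2 - Z ^ 2) ≤
      ((κ + Y) ^ (2 * (i + 1) + 1) + (κ - Y) ^ (2 * (i + 1) + 1)) -
      ((κ + Z) ^ (2 * (i + 1) + 1) + (κ - Z) ^ (2 * (i + 1) + 1)) := by
  have hA : ∀ y : ℝ, (κ + y) ^ (2 * (i + 1) + 1) + (κ - y) ^ (2 * (i + 1) + 1) =
      (κ ^ 2 + y ^ 2) * ((κ + y) ^ (2 * i + 1) + (κ - y) ^ (2 * i + 1)) +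
      2 * κ * (y * ((κ + y) ^ (2 * i + 1) - (κ - y) ^ (2 * i + 1))) := by intro y; ring
  rw [hA Y, hA Z]
  obtain ⟨h1, h2, h3, h4⟩ := phase_mono hκ h i
  have hκp : 0 < κ ^ (2 * i + 1) := by positivity
  generalize (κ + Z) ^ (2 * i + 1) + (κ - Z) ^ (2 * i + 1) = a at *
  generalize Z * ((κ + Z) ^ (2 * i + 1) - (κ - Z) ^ (2 * i + 1)) = b at *
  generalize (κ + Y) ^ (2 * i + 1) + (κ - Y) ^ (2 * i + 1) = a' at *
  generalize Y * ((κ + Y) ^ (2 * i + 1) - (κ - Y) ^ (2 * i + 1)) = b' at *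
  have e1 : 0 ≤ (a - 2 * κ ^ (2 * i + 1)) * (Y ^ 2 - Z ^ 2) :=
    mul_nonneg (by linarith) (by linarith)
  have e2 : 0 ≤ (κ ^ 2 + Y ^ 2) * (a' - a) := mul_nonneg (by positivity) (by linarith)
  have e3 : 0 ≤ 2 * κ * (b' - b) := mul_nonneg (by positivity) (by linarith)
  linarith

/-- `phase_gap_pos` for either sign of `κ`, since the phase is odd in `κ`. -/
lemma phase_gap {κ : ℝ} (hκ : κ ≠ 0) (Y Z : ℝ) (i : ℕ) :
    2 * |κ| ^ (2 * i + 1) * |Y ^ 2 - Z ^ 2| ≤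
      |((κ + Y) ^ (2 * (i + 1) + 1) + (κ - Y) ^ (2 * (i + 1) + 1)) -
      ((κ + Z) ^ (2 * (i + 1) + 1) + (κ - Z) ^ (2 * (i + 1) + 1))| := by
  wlog hpos : 0 < κ generalizing κ
  · have hneg : 0 < -κ := by
      have := lt_of_le_of_ne (not_lt.1 hpos) hκ
      linarith
    have := this (neg_ne_zero.2 hκ) hneg
    have hodd : Odd (2 * (i + 1) + 1) := ⟨i + 1, rfl⟩
    have hy : ∀ y : ℝ, (-κ + y) ^ (2 * (i + 1) + 1) + (-κ - y) ^ (2 * (i + 1) + 1) =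
        -((κ + y) ^ (2 * (i + 1) + 1) + (κ - y) ^ (2 * (i + 1) + 1)) := by
      intro y
      rw [show -κ + y = -(κ - y) by ring, show -κ - y = -(κ + y) by ring, hodd.neg_pow,
        hodd.neg_pow]
      ring
    rw [hy, hy, abs_neg, ← neg_sub', abs_neg] at this
    exact this
  wlog hYZ : Z ^ 2 ≤ Y ^ 2 generalizing Y Z
  · have := this Z Y (le_of_not_ge hYZ)
    rwa [abs_sub_comm, abs_sub_comm (_ + _ : ℝ)] at this
  rw [abs_of_pos hpos, abs_of_nonneg (sub_nonneg.2 hYZ)]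
  exact (phase_gap_pos hpos hYZ i).trans (le_abs_self _)

/-- A set of integers of diameter at most `d` has at most `2d + 1` elements. -/
lemma tsum_indicator_le_of_diam {S : Set ℤ} {d : ℝ} (hd : 0 ≤ d)
    (hS : ∀ x ∈ S, ∀ y ∈ S, |(x : ℝ) - y| ≤ d) :
    ∑' x : ℤ, S.indicator (1 : ℤ → ℝ≥0∞) x ≤ ENNReal.ofReal (2 * d + 1) := by
  rcases S.eq_empty_or_nonempty with rfl | ⟨x₀, hx₀⟩
  · simp
  set T : Finset ℤ := Finset.Icc (x₀ - ⌊d⌋) (x₀ + ⌊d⌋) with hT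
  have hsub : ∀ x ∈ S, x ∈ T := by
    intro x hx
    have h := hS x hx x₀ hx₀
    have h' : |x - x₀| ≤ ⌊d⌋ := by
      rw [Int.le_floor]
      push_cast
      exact h
    rw [abs_le] at h'
    rw [hT, Finset.mem_Icc]
    constructor <;> linarith [h'.1, h'.2]
  calc ∑' x : ℤ, S.indicator (1 : ℤ → ℝ≥0∞) x
      ≤ ∑' x : ℤ, (T : Set ℤ).indicator (1 : ℤ → ℝ≥0∞) x :=
        ENNReal.tsum_le_tsum fun x =>
          Set.indicator_le_indicator_of_subset (fun y hy => hsub y hy) (fun _ => zero_le) x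
    _ = (T.card : ℝ≥0∞) := by
        rw [← tsum_subtype]
        simp
    _ ≤ ENNReal.ofReal (2 * d + 1) := by
        rw [← ENNReal.ofReal_natCast]
        apply ENNReal.ofReal_le_ofReal
        have h0 : 0 ≤ ⌊d⌋ := Int.floor_nonneg.2 hd
        have : (T.card : ℤ) = 2 * ⌊d⌋ + 1 := by
          rw [hT, Int.card_Icc, Int.toNat_of_nonneg] <;> linarith
        have h2 : (T.card : ℝ) = 2 * ⌊d⌋ + 1 := by exact_mod_cast this
        rw [h2]
        linarith [Int.floor_le d]

/-- Counting lemma: when `|k| ≥ R`, the phase `k₁ ↦ k₁^p + (k - k₁)^p`, with `p = 2i + 3`, lies in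
an interval of radius `4 R^p` for at most `O(R)` integers `k₁`. In terms of `Y = 2k₁ - k` the phase
gap bounds the spread of `Y²` by `O(R²)`, so on each of the half-lines `Y ≥ 0` and `Y < 0` the
admissible `Y` have diameter `O(R)`. -/
lemma phase_count (i : ℕ) {R : ℝ} (hR : 1 ≤ R) {k : ℤ} (hk : R ≤ |(k : ℝ)|) (c : ℝ) :
    ∑' x : ℤ, {x : ℤ | |c - ((x : ℝ) ^ (2 * (i + 1) + 1) +
        ((k : ℝ) - x) ^ (2 * (i + 1) + 1))| ≤ 4 * R ^ (2 * (i + 1) + 1)}.indicator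
          (1 : ℤ → ℝ≥0∞) x ≤
      ENNReal.ofReal (2 ^ (2 * i + 6) * R) := by
  set p := 2 * (i + 1) + 1 with hp
  set S : Set ℤ := {x : ℤ | |c - ((x : ℝ) ^ p + ((k : ℝ) - x) ^ p)| ≤ 4 * R ^ p} with hS
  have hR0 : 0 < R := by linarith
  have hk0 : 0 < |(k : ℝ)| := by linarith
  have hk0' : (k : ℝ) ≠ 0 := abs_pos.1 hk0
  set d : ℝ := 2 ^ (2 * i + 3) * R with hd
  have hd0 : 0 ≤ d := by positivity
  -- the exponents combine as `R^p / R^{p-2} = R²`; `d` is chosen so that `d²` absorbs the constant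
  have key : ∀ x ∈ S, ∀ y ∈ S,
      |(2 * (x : ℝ) - k) ^ 2 - (2 * (y : ℝ) - k) ^ 2| ≤ d ^ 2 := by
    intro x hx y hy
    have hx' : |c - ((x : ℝ) ^ p + ((k : ℝ) - x) ^ p)| ≤ 4 * R ^ p := hx
    have hy' : |c - ((y : ℝ) ^ p + ((k : ℝ) - y) ^ p)| ≤ 4 * R ^ p := hy
    have hg := phase_gap hk0' (2 * (x : ℝ) - k) (2 * (y : ℝ) - k) i
    rw [← hp] at hg
    have e : ∀ z : ℝ, ((k : ℝ) + (2 * z - k)) ^ p + ((k : ℝ) - (2 * z - k)) ^ p =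
        2 ^ p * (z ^ p + (k - z) ^ p) := by
      intro z
      rw [show (k : ℝ) + (2 * z - k) = 2 * z by ring,
        show (k : ℝ) - (2 * z - k) = 2 * (k - z) by ring, mul_pow, mul_pow]
      ring
    rw [e, e, ← mul_sub, abs_mul, abs_of_pos (show (0 : ℝ) < 2 ^ p by positivity)] at hg
    have h8 : |((x : ℝ) ^ p + (k - x : ℝ) ^ p) - ((y : ℝ) ^ p + (k - y : ℝ) ^ p)| ≤ 8 * R ^ p := by
      rw [abs_le] at hx' hy' ⊢
      constructor <;> linarith [hx'.1, hx'.2, hy'.1, hy'.2]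
    have hkR : R ^ (2 * i + 1) ≤ |(k : ℝ)| ^ (2 * i + 1) := by gcongr
    have hRp : 0 < R ^ (2 * i + 1) := by positivity
    set W := |(2 * (x : ℝ) - k) ^ 2 - (2 * (y : ℝ) - k) ^ 2|
    have h3 : 2 * R ^ (2 * i + 1) * W ≤ 2 ^ p * (8 * R ^ p) :=
      calc 2 * R ^ (2 * i + 1) * W ≤ 2 * |(k : ℝ)| ^ (2 * i + 1) * W := by gcongr
        _ ≤ _ := hg
        _ ≤ _ := by gcongr
    have h4 : 2 ^ p * (8 * R ^ p) = 2 * R ^ (2 * i + 1) * (2 ^ (2 * i + 5) * R ^ 2) := by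
      rw [hp]; ring
    rw [h4] at h3
    have h5 : W ≤ 2 ^ (2 * i + 5) * R ^ 2 := le_of_mul_le_mul_left h3 (by positivity)
    refine h5.trans ?_
    rw [hd, mul_pow, ← pow_mul]
    gcongr
    · norm_num
    · omega
  -- for `Y`, `Z` of the same sign, `(Y - Z)² ≤ |Y² - Z²|`
  have half : ∀ x ∈ S, ∀ y ∈ S, 0 ≤ (2 * (x : ℝ) - k) * (2 * (y : ℝ) - k) →
      |(x : ℝ) - y| ≤ d := by
    intro x hx y hy hxy
    have h := abs_le.1 (key x hx y hy)
    apply abs_le_of_sq_le_sq _ hd0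
    rcases le_total ((2 * (x : ℝ) - k) ^ 2) ((2 * (y : ℝ) - k) ^ 2) with h' | h'
    · have : |2 * (x : ℝ) - k| ≤ |2 * (y : ℝ) - k| := sq_le_sq.1 h'
      have h6 : (2 * (x : ℝ) - k) ^ 2 ≤ (2 * (x : ℝ) - k) * (2 * (y : ℝ) - k) := by
        rw [← abs_of_nonneg hxy, abs_mul, ← sq_abs, sq]
        gcongr
      nlinarith [sq_nonneg ((x : ℝ) - y), h.1]
    · have : |2 * (y : ℝ) - k| ≤ |2 * (x : ℝ) - k| := sq_le_sq.1 h'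
      have h6 : (2 * (y : ℝ) - k) ^ 2 ≤ (2 * (x : ℝ) - k) * (2 * (y : ℝ) - k) := by
        rw [← abs_of_nonneg hxy, abs_mul, ← sq_abs (2 * (y : ℝ) - k), sq]
        gcongr
      nlinarith [sq_nonneg ((x : ℝ) - y), h.2]
  set S₁ : Set ℤ := {x ∈ S | 0 ≤ 2 * (x : ℝ) - k} with hS₁
  set S₂ : Set ℤ := {x ∈ S | 2 * (x : ℝ) - k ≤ 0} with hS₂
  have c₁ := tsum_indicator_le_of_diam (S := S₁) hd0 fun x hx y hy =>
    half x hx.1 y hy.1 (mul_nonneg hx.2 hy.2)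
  have c₂ := tsum_indicator_le_of_diam (S := S₂) hd0 fun x hx y hy =>
    half x hx.1 y hy.1 (mul_nonneg_of_nonpos_of_nonpos hx.2 hy.2)
  calc ∑' x : ℤ, S.indicator (1 : ℤ → ℝ≥0∞) x
      ≤ ∑' x : ℤ, (S₁.indicator (1 : ℤ → ℝ≥0∞) x + S₂.indicator (1 : ℤ → ℝ≥0∞) x) := by
        refine ENNReal.tsum_le_tsum fun x => ?_
        by_cases hx : x ∈ S
        · rcases le_total 0 (2 * (x : ℝ) - k) with h | h
          · have : x ∈ S₁ := ⟨hx, h⟩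
            simp [hx, this]
          · have : x ∈ S₂ := ⟨hx, h⟩
            simp [hx, this]
        · simp [hx]
    _ ≤ ENNReal.ofReal (2 * d + 1) + ENNReal.ofReal (2 * d + 1) := by
        rw [ENNReal.tsum_add]
        gcongr
    _ ≤ _ := by
        rw [← ENNReal.ofReal_add (by positivity) (by positivity)]
        apply ENNReal.ofReal_le_ofReal
        have : (2 : ℝ) ^ (2 * i + 6) * R = 8 * d := by rw [hd]; ring
        have h8 : (8 : ℝ) ≤ 2 ^ (2 * i + 3) := by
          calc (8 : ℝ) = 2 ^ 3 := by norm_num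
            _ ≤ _ := by gcongr <;> norm_num
        have : 1 ≤ d := by rw [hd]; nlinarith
        linarith

/-! ### The estimate at fixed modulations -/

/-- Counting measure times Lebesgue measure on `ℤ × ℝ`. -/
abbrev zr : Measure (ℤ × ℝ) := (Measure.count : Measure ℤ).prod (volume : Measure ℝ)

lemma lintegral_zr {F : ℤ × ℝ → ℝ≥0∞} (hF : Measurable F) :
    ∫⁻ z, F z ∂zr = ∑' k : ℤ, ∫⁻ τ, F (k, τ) := by
  rw [lintegral_prod _ hF.aemeasurable, lintegral_count]

/-- The overlap of two intervals is at most as long as the shorter one. -/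
lemma volume_overlap_le (c d s N₁ N₂ : ℝ) :
    volume {t : ℝ | |t - c| ≤ 2 * N₁ ∧ |s - t - d| ≤ 2 * N₂} ≤
      ENNReal.ofReal (4 * min N₁ N₂) := by
  rcases le_total N₁ N₂ with h | h
  · rw [min_eq_left h]
    calc _ ≤ volume (Set.Icc (c - 2 * N₁) (c + 2 * N₁)) := by
          apply measure_mono
          intro t ht
          have := abs_le.1 ht.1
          constructor <;> linarith [this.1, this.2]
      _ = _ := by rw [Real.volume_Icc]; congr 1; ring
  · rw [min_eq_right h]
    calc _ ≤ volume (Set.Icc (s - d - 2 * N₂) (s - d + 2 * N₂)) := by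
          apply measure_mono
          intro t ht
          have := abs_le.1 ht.2
          constructor <;> linarith [this.1, this.2]
      _ = _ := by rw [Real.volume_Icc]; congr 1; ring

lemma measurableSet_high (R : ℝ) : MeasurableSet {z : ℤ × ℝ | R ≤ |(z.1 : ℝ)|} := by
  have h : MeasurableSet ((Prod.fst : ℤ × ℝ → ℤ) ⁻¹' {k : ℤ | R ≤ |(k : ℝ)|}) :=
    measurable_fst MeasurableSet.of_discrete
  exact h

section Localized

variable {i : ℕ} {R N₁ N₂ : ℝ} {F G : ℤ × ℝ → ℝ≥0∞}

/-- High output frequencies `|k| ≥ R`: pointwise Cauchy–Schwarz, with the measure of the overlap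
bounded by the counting lemma. -/
lemma localized_high (hR : 1 ≤ R)
    (h₁ : N₁ ≤ R ^ (2 * (i + 1) + 1)) (h₂ : N₂ ≤ R ^ (2 * (i + 1) + 1))
    (hF : Measurable F) (hG : Measurable G)
    (sF : ∀ k τ, F (k, τ) ≠ 0 → |sig (i + 1) k τ| ≤ 2 * N₁)
    (sG : ∀ k τ, G (k, τ) ≠ 0 → |sig (i + 1) k τ| ≤ 2 * N₂) :
    ∫⁻ z in {z : ℤ × ℝ | R ≤ |(z.1 : ℝ)|}, cv zr F G z ^ 2 ∂zr ≤
      ENNReal.ofReal (4 * min N₁ N₂) * ENNReal.ofReal (2 ^ (2 * i + 6) * R) *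
        (∫⁻ z, F z ^ 2 ∂zr) * ∫⁻ z, G z ^ 2 ∂zr := by
  refine lintegral_cv_sq_le hF hG ?_ ?_
  · exact measurableSet_high R
  rintro ⟨k, τ⟩ hk
  have hGz : Measurable fun w => G ((k, τ) - w) := by fun_prop
  have hSm : MeasurableSet {w | F w ≠ 0 ∧ G ((k, τ) - w) ≠ 0} :=
    (hF (measurableSet_singleton 0).compl).inter (hGz (measurableSet_singleton 0).compl)
  rw [Measure.prod_apply hSm, lintegral_count]
  refine le_trans ?_ (mul_le_mul_right (phase_count i hR hk τ) _)
  rw [← ENNReal.tsum_mul_left]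
  refine ENNReal.tsum_le_tsum fun x => ?_
  set V : Set ℝ := Prod.mk x ⁻¹' {w | F w ≠ 0 ∧ G ((k, τ) - w) ≠ 0} with hV
  have hsub : ∀ t ∈ V, |t - (x : ℝ) ^ (2 * (i + 1) + 1)| ≤ 2 * N₁ ∧
      |τ - t - ((k : ℝ) - x) ^ (2 * (i + 1) + 1)| ≤ 2 * N₂ := by
    intro t ht
    have e1 := sF x t ht.1
    have e2 := sG (k - x) (τ - t) ht.2
    simp only [sig, Int.cast_sub] at e1 e2
    exact ⟨e1, e2⟩
  by_cases hx : |τ - ((x : ℝ) ^ (2 * (i + 1) + 1) +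
      ((k : ℝ) - x) ^ (2 * (i + 1) + 1))| ≤ 4 * R ^ (2 * (i + 1) + 1)
  · rw [Set.indicator_of_mem (by exact hx), Pi.one_apply, mul_one]
    exact (measure_mono hsub).trans (volume_overlap_le _ _ _ _ _)
  · have : V = ∅ := by
      refine Set.eq_empty_of_forall_notMem fun t ht => hx ?_
      obtain ⟨e1, e2⟩ := hsub t ht
      rw [abs_le] at e1 e2 ⊢
      constructor <;> linarith [e1.1, e1.2, e2.1, e2.2]
    rw [this, measure_empty]
    exact zero_le

/-- A single output frequency `k`: Minkowski in the sum over `k₁`, Cauchy–Schwarz in `τ₁`, and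
Cauchy–Schwarz in `k₁`. -/
lemma localized_slice (hF : Measurable F) (hG : Measurable G)
    (sF : ∀ k τ, F (k, τ) ≠ 0 → |sig (i + 1) k τ| ≤ 2 * N₁)
    (sG : ∀ k τ, G (k, τ) ≠ 0 → |sig (i + 1) k τ| ≤ 2 * N₂) (k : ℤ) :
    ∫⁻ τ, cv zr F G (k, τ) ^ 2 ≤
      ENNReal.ofReal (4 * min N₁ N₂) * (∫⁻ z, F z ^ 2 ∂zr) * ∫⁻ z, G z ^ 2 ∂zr := by
  set a : ℤ → ℝ≥0∞ := fun x => nrm volume fun t => F (x, t) with ha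
  set b : ℤ → ℝ≥0∞ := fun x => nrm volume fun t => G (x, t) with hb
  set D := ENNReal.ofReal (4 * min N₁ N₂) with hD
  have hFx : ∀ x, Measurable fun t => F (x, t) := fun x => by fun_prop
  have hGx : ∀ x, Measurable fun t => G (x, t) := fun x => by fun_prop
  have hcv : ∀ τ, cv zr F G (k, τ) =
      ∑' x : ℤ, cv volume (fun t => F (x, t)) (fun t => G (k - x, t)) τ := by
    intro τ
    unfold cv
    rw [lintegral_zr (by fun_prop)]
    rfl
  have hone : ∀ x : ℤ, nrm volume (cv volume (fun t => F (x, t)) (fun t => G (k - x, t))) ≤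
      D ^ (1 / 2 : ℝ) * (a x * b (k - x)) := by
    intro x
    apply le_of_sq_le
    rw [nrm_sq, mul_pow, mul_pow, rpow_half_sq, ha, hb, nrm_sq, nrm_sq, ← mul_assoc]
    have := lintegral_cv_sq_le (μ := volume) (hFx x) (hGx (k - x)) (E := Set.univ)
      MeasurableSet.univ (B := D) ?_
    · simpa using this
    · intro z _
      refine (measure_mono ?_).trans (volume_overlap_le ((x : ℝ) ^ (2 * (i + 1) + 1))
        (((k - x : ℤ) : ℝ) ^ (2 * (i + 1) + 1)) z N₁ N₂)
      intro t ht
      exact ⟨sF x t ht.1, sG (k - x) (z - t) ht.2⟩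
  have hb' : ∑' x : ℤ, b (k - x) ^ 2 = ∑' x : ℤ, b x ^ 2 :=
    (Equiv.subLeft k).tsum_eq fun x => b x ^ 2
  have hsum : nrm volume (fun τ => cv zr F G (k, τ)) ≤
      D ^ (1 / 2 : ℝ) * ((∑' x, a x ^ 2) ^ (1 / 2 : ℝ) * (∑' x, b x ^ 2) ^ (1 / 2 : ℝ)) := by
    simp_rw [hcv]
    refine (nrm_tsum_le volume fun x => measurable_cv (hFx x) (hGx (k - x))).trans ?_
    refine (ENNReal.tsum_le_tsum hone).trans ?_
    rw [ENNReal.tsum_mul_left, ← hb']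
    gcongr
    exact tsum_mul_le a fun x => b (k - x)
  have hA : ∑' x, a x ^ 2 = ∫⁻ z, F z ^ 2 ∂zr := by
    rw [lintegral_zr (by fun_prop)]
    simp_rw [ha, nrm_sq]
  have hB : ∑' x, b x ^ 2 = ∫⁻ z, G z ^ 2 ∂zr := by
    rw [lintegral_zr (by fun_prop)]
    simp_rw [hb, nrm_sq]
  rw [← nrm_sq volume (fun τ => cv zr F G (k, τ))]
  calc _ ≤ (D ^ (1 / 2 : ℝ) *
        ((∑' x, a x ^ 2) ^ (1 / 2 : ℝ) * (∑' x, b x ^ 2) ^ (1 / 2 : ℝ))) ^ 2 := by gcongr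
    _ = _ := by
      rw [mul_pow, mul_pow, rpow_half_sq, rpow_half_sq, rpow_half_sq, hA, hB, mul_assoc]

/-- Low output frequencies `|k| < R`: the single-frequency bound, summed over `O(R)` values of
`k`. -/
lemma localized_low (hR : 1 ≤ R) (hF : Measurable F) (hG : Measurable G)
    (sF : ∀ k τ, F (k, τ) ≠ 0 → |sig (i + 1) k τ| ≤ 2 * N₁)
    (sG : ∀ k τ, G (k, τ) ≠ 0 → |sig (i + 1) k τ| ≤ 2 * N₂) :
    ∫⁻ z in {z : ℤ × ℝ | R ≤ |(z.1 : ℝ)|}ᶜ, cv zr F G z ^ 2 ∂zr ≤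
      ENNReal.ofReal (4 * min N₁ N₂) * ENNReal.ofReal (5 * R) *
        (∫⁻ z, F z ^ 2 ∂zr) * ∫⁻ z, G z ^ 2 ∂zr := by
  have hE : MeasurableSet {z : ℤ × ℝ | R ≤ |(z.1 : ℝ)|}ᶜ :=
    (measurableSet_high R).compl
  have hm := measurable_cv (μ := zr) hF hG
  rw [← lintegral_indicator hE, lintegral_zr ((hm.pow_const 2).indicator hE)]
  set X := ENNReal.ofReal (4 * min N₁ N₂) * (∫⁻ z, F z ^ 2 ∂zr) * ∫⁻ z, G z ^ 2 ∂zr with hX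
  set T : Set ℤ := {k : ℤ | |(k : ℝ)| < R} with hT
  have hcount : ∑' k : ℤ, T.indicator (1 : ℤ → ℝ≥0∞) k ≤ ENNReal.ofReal (5 * R) := by
    refine (tsum_indicator_le_of_diam (d := 2 * R) (by linarith) ?_).trans
      (ENNReal.ofReal_le_ofReal (by linarith))
    intro x hx y hy
    have := abs_sub (x : ℝ) y
    have h1 : |(x : ℝ)| < R := hx
    have h2 : |(y : ℝ)| < R := hy
    linarith
  calc _ ≤ ∑' k : ℤ, T.indicator (1 : ℤ → ℝ≥0∞) k * X := by
        refine ENNReal.tsum_le_tsum fun k => ?_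
        by_cases hk : |(k : ℝ)| < R
        · have hk' : k ∈ T := hk
          rw [Set.indicator_of_mem hk', Pi.one_apply, one_mul]
          refine le_trans (lintegral_mono fun τ => ?_) (localized_slice hF hG sF sG k)
          exact Set.indicator_le_self _ _ _
        · have : ∀ τ : ℝ, ({z : ℤ × ℝ | R ≤ |(z.1 : ℝ)|}ᶜ).indicator
              (fun z => cv zr F G z ^ 2) (k, τ) = 0 := by
            intro τ
            apply Set.indicator_of_notMem
            simpa using hk
          simp [this]
    _ = (∑' k : ℤ, T.indicator (1 : ℤ → ℝ≥0∞) k) * X := ENNReal.tsum_mul_right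
    _ ≤ ENNReal.ofReal (5 * R) * X := by gcongr
    _ = _ := by rw [hX]; ring

/-- The estimate for functions localized at modulations `N₁` and `N₂`, both at most `R^p`. -/
lemma localized (hR : 1 ≤ R) (p₁ : 0 < N₁) (p₂ : 0 < N₂)
    (h₁ : N₁ ≤ R ^ (2 * (i + 1) + 1)) (h₂ : N₂ ≤ R ^ (2 * (i + 1) + 1))
    (hF : Measurable F) (hG : Measurable G)
    (sF : ∀ k τ, F (k, τ) ≠ 0 → |sig (i + 1) k τ| ≤ 2 * N₁)
    (sG : ∀ k τ, G (k, τ) ≠ 0 → |sig (i + 1) k τ| ≤ 2 * N₂) :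
    nrm zr (cv zr F G) ≤ ENNReal.ofReal ((2 ^ (2 * i + 8) + 20) * (min N₁ N₂ * R)) ^ (1 / 2 : ℝ) *
        (nrm zr F * nrm zr G) := by
  have hE : MeasurableSet {z : ℤ × ℝ | R ≤ |(z.1 : ℝ)|} :=
    measurableSet_high R
  have hN : 0 < min N₁ N₂ := lt_min p₁ p₂
  apply le_of_sq_le
  rw [nrm_sq, mul_pow, mul_pow, rpow_half_sq, nrm_sq, nrm_sq, ← lintegral_add_compl _ hE]
  refine (add_le_add (localized_high hR h₁ h₂ hF hG sF sG)
    (localized_low hR hF hG sF sG)).trans_eq ?_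
  have : ENNReal.ofReal ((2 ^ (2 * i + 8) + 20) * (min N₁ N₂ * R)) =
      ENNReal.ofReal (4 * min N₁ N₂) * ENNReal.ofReal (2 ^ (2 * i + 6) * R) +
      ENNReal.ofReal (4 * min N₁ N₂) * ENNReal.ofReal (5 * R) := by
    rw [← ENNReal.ofReal_mul (by positivity), ← ENNReal.ofReal_mul (by positivity),
      ← ENNReal.ofReal_add (by positivity) (by positivity)]
    congr 1
    ring
  rw [this]
  ring

end Localized

/-! ### Dyadic decomposition in the modulation and summation -/

/-- The dyadic shell `2^m ≤ ⟨σ⟩ < 2^{m+1}`. -/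
def shell (j m : ℕ) : Set (ℤ × ℝ) :=
  {z | (2 : ℝ) ^ m ≤ jap (sig j z.1 z.2) ∧ jap (sig j z.1 z.2) < 2 ^ (m + 1)}

lemma one_le_jap (x : ℝ) : 1 ≤ jap x := by
  unfold jap
  rw [Real.one_le_sqrt]
  nlinarith [sq_nonneg x]

lemma abs_le_jap (x : ℝ) : |x| ≤ jap x := by
  unfold jap
  apply Real.abs_le_sqrt
  linarith

lemma measurable_jap_sig (j : ℕ) : Measurable fun z : ℤ × ℝ => jap (sig j z.1 z.2) := by
  have : Measurable fun z : ℤ × ℝ => (z.1 : ℝ) :=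
    (Measurable.of_discrete (f := fun k : ℤ => (k : ℝ))).comp measurable_fst
  unfold jap sig
  fun_prop

lemma measurableSet_shell (j m : ℕ) : MeasurableSet (shell j m) :=
  (measurableSet_le measurable_const (measurable_jap_sig j)).inter
    (measurableSet_lt (measurable_jap_sig j) measurable_const)

lemma tsum_shell (j : ℕ) (F : ℤ × ℝ → ℝ≥0∞) (z : ℤ × ℝ) :
    ∑' m : ℕ, (shell j m).indicator F z = F z := by
  obtain ⟨m, hm⟩ := exists_nat_pow_near (one_le_jap (sig j z.1 z.2)) one_lt_two
  rw [tsum_eq_single m, Set.indicator_of_mem (show z ∈ shell j m from hm)]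
  intro n hn
  apply Set.indicator_of_notMem
  rintro ⟨h1, h2⟩
  have e1 : n < m + 1 := (pow_lt_pow_iff_right₀ one_lt_two).1 (h1.trans_lt hm.2)
  have e2 : m < n + 1 := (pow_lt_pow_iff_right₀ one_lt_two).1 (hm.1.trans_lt h2)
  omega

lemma tsum_nrm_shell_sq (j : ℕ) {F : ℤ × ℝ → ℝ≥0∞} (hF : Measurable F) :
    ∑' m : ℕ, nrm zr ((shell j m).indicator F) ^ 2 = nrm zr F ^ 2 := by
  simp_rw [nrm_sq]
  rw [← lintegral_tsum fun m =>
    ((hF.indicator (measurableSet_shell j m)).pow_const 2).aemeasurable]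
  congr 1 with z
  rw [← tsum_shell j (fun z => F z ^ 2) z]
  congr 1 with m
  by_cases hz : z ∈ shell j m <;> simp [hz]

/-- On the shell `⟨σ⟩ ~ 2^m` the weight `⟨σ⟩^a` is at least `2^{am}`, because `a ≥ 0`. -/
lemma nrm_shell_le (j m : ℕ) {a : ℝ} (ha : 0 ≤ a) {F : ℤ × ℝ → ℝ≥0∞} (hF : Measurable F) :
    nrm zr ((shell j m).indicator F) ≤ ENNReal.ofReal (2 ^ (-(a * m))) *
      nrm zr ((shell j m).indicator
        fun z => ENNReal.ofReal (jap (sig j z.1 z.2) ^ a) * F z) := by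
  have hw : Measurable fun z : ℤ × ℝ => ENNReal.ofReal (jap (sig j z.1 z.2) ^ a) * F z :=
    ((measurable_jap_sig j).pow_const a).ennreal_ofReal.mul hF
  rw [← nrm_const_mul _ (hw.indicator (measurableSet_shell j m))]
  refine nrm_mono fun z => ?_
  by_cases hz : z ∈ shell j m
  · simp only [Set.indicator_of_mem hz]
    rw [← mul_assoc, ← ENNReal.ofReal_mul (by positivity)]
    refine le_mul_of_one_le_left zero_le ?_
    rw [ENNReal.one_le_ofReal]
    have h1 : ((2 : ℝ) ^ (m : ℝ)) ^ a ≤ jap (sig j z.1 z.2) ^ a := by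
      rw [Real.rpow_natCast]
      exact Real.rpow_le_rpow (by positivity) hz.1 ha
    rw [← Real.rpow_mul (by norm_num), mul_comm] at h1
    calc (1 : ℝ) = 2 ^ (-(a * m)) * 2 ^ (a * m) := by
          rw [← Real.rpow_add (by norm_num)]; simp
      _ ≤ _ := by gcongr
  · simp [hz]

/-- Schur's test for the kernel `h (m - n)` on `ℕ × ℕ`. -/
lemma schur (h : ℤ → ℝ≥0∞) (x y : ℕ → ℝ≥0∞) :
    ∑' m : ℕ, ∑' n : ℕ, h ((m : ℤ) - n) * (x m * y n) ≤
      (∑' z, h z) * ((∑' m, x m ^ 2) ^ (1 / 2 : ℝ) * (∑' n, y n ^ 2) ^ (1 / 2 : ℝ)) := by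
  set S := ∑' z, h z with hS
  have row : ∀ m : ℕ, ∑' n : ℕ, h ((m : ℤ) - n) ≤ S := fun m =>
    ENNReal.tsum_comp_le_tsum_of_injective (f := fun n : ℕ => (m : ℤ) - n)
      (fun n n' hn => by simpa using hn) h
  have col : ∀ n : ℕ, ∑' m : ℕ, h ((m : ℤ) - n) ≤ S := fun n =>
    ENNReal.tsum_comp_le_tsum_of_injective (f := fun m : ℕ => (m : ℤ) - n)
      (fun n n' hn => by simpa using hn) h
  have half : ∀ u : ℝ≥0∞, u ^ (1 / 2 : ℝ) * u ^ (1 / 2 : ℝ) = u := by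
    intro u
    rw [← sq, rpow_half_sq]
  have cs := tsum_mul_le
    (fun q : ℕ × ℕ => h ((q.1 : ℤ) - q.2) ^ (1 / 2 : ℝ) * x q.1)
    (fun q : ℕ × ℕ => h ((q.1 : ℤ) - q.2) ^ (1 / 2 : ℝ) * y q.2)
  have e : ∀ u v w : ℝ≥0∞, u ^ (1 / 2 : ℝ) * v * (u ^ (1 / 2 : ℝ) * w) = u * (v * w) := by
    intro u v w
    rw [mul_mul_mul_comm, half]
  simp_rw [mul_pow, rpow_half_sq, e] at cs
  rw [ENNReal.tsum_prod', ENNReal.tsum_prod', ENNReal.tsum_prod'] at cs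
  have r1 : ∑' m : ℕ, ∑' n : ℕ, h ((m : ℤ) - n) * x m ^ 2 ≤ S * ∑' m, x m ^ 2 := by
    rw [← ENNReal.tsum_mul_left]
    refine ENNReal.tsum_le_tsum fun m => ?_
    rw [ENNReal.tsum_mul_right]
    gcongr
    exact row m
  have r2 : ∑' m : ℕ, ∑' n : ℕ, h ((m : ℤ) - n) * y n ^ 2 ≤ S * ∑' n, y n ^ 2 := by
    rw [ENNReal.tsum_comm, ← ENNReal.tsum_mul_left]
    refine ENNReal.tsum_le_tsum fun n => ?_
    rw [ENNReal.tsum_mul_right]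
    gcongr
    exact col n
  refine cs.trans ?_
  calc _ ≤ (S * ∑' m, x m ^ 2) ^ (1 / 2 : ℝ) * (S * ∑' n, y n ^ 2) ^ (1 / 2 : ℝ) := by
        dsimp only
        gcongr
    _ = _ := by
        rw [ENNReal.mul_rpow_of_nonneg _ _ (by norm_num),
          ENNReal.mul_rpow_of_nonneg _ _ (by norm_num), mul_mul_mul_comm, half]

lemma tsum_geometric_int_ne_top {r : ℝ} (h0 : 0 ≤ r) (h1 : r < 1) :
    ∑' z : ℤ, ENNReal.ofReal (r ^ z.natAbs) ≠ ⊤ := by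
  have hs : Summable fun z : ℤ => r ^ z.natAbs := by
    apply Summable.of_nat_of_neg <;> simpa using summable_geometric_of_lt_one h0 h1
  exact hs.tsum_ofReal_ne_top

/-- Exponent count for modulations `2^m` and `2^n`: at the endpoint of `a + b` there is no gain
along the diagonal, and `min a b > 1/(2p)` gives geometric decay off it. -/
lemma exponent_le {p a b : ℝ} (hp : 0 < p) (hab : (p + 1) / (2 * p) ≤ a + b) (m n : ℕ) :
    ((min m n : ℕ) + (max m n : ℕ) / p) / 2 + -(a * m) + -(b * n) ≤
      -(min a b - 1 / (2 * p)) * ((m : ℤ) - n).natAbs := by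
  have hpe : (p + 1) / (2 * p) = 1 / 2 + 1 / (2 * p) := by field_simp
  have hq : ∀ t : ℝ, t / p = 2 * (1 / (2 * p)) * t := by intro t; field_simp
  rw [hpe] at hab
  rw [hq]
  generalize 1 / (2 * p) = q at *
  have hma := min_le_left a b
  have hmb := min_le_right a b
  rcases le_total m n with h | h
  · obtain ⟨d, rfl⟩ := Nat.exists_eq_add_of_le h
    rw [min_eq_left h, max_eq_right h]
    have : ((m : ℤ) - (m + d : ℕ)).natAbs = d := by omega
    rw [this]
    push_cast
    have hd : (0 : ℝ) ≤ d := by positivity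
    have hm : (0 : ℝ) ≤ m := by positivity
    nlinarith [mul_nonneg hm (sub_nonneg.2 hab), mul_nonneg hd (sub_nonneg.2 hmb)]
  · obtain ⟨d, rfl⟩ := Nat.exists_eq_add_of_le h
    rw [min_eq_right h, max_eq_left h]
    have : (((n + d : ℕ) : ℤ) - n).natAbs = d := by omega
    rw [this]
    push_cast
    have hd : (0 : ℝ) ≤ d := by positivity
    have hn : (0 : ℝ) ≤ n := by positivity
    nlinarith [mul_nonneg hn (sub_nonneg.2 hab), mul_nonneg hd (sub_nonneg.2 hma)]

lemma cv_decomp (j : ℕ) {F G : ℤ × ℝ → ℝ≥0∞} (hF : Measurable F) (hG : Measurable G)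
    (z : ℤ × ℝ) :
    cv zr F G z = ∑' m : ℕ, ∑' n : ℕ,
      cv zr ((shell j m).indicator F) ((shell j n).indicator G) z := by
  have hFm := fun m => hF.indicator (measurableSet_shell j m)
  have hGm := fun m => hG.indicator (measurableSet_shell j m)
  have hpt : ∀ w, F w * G (z - w) = ∑' m : ℕ, ∑' n : ℕ,
      (shell j m).indicator F w * (shell j n).indicator G (z - w) := by
    intro w
    simp_rw [ENNReal.tsum_mul_left, tsum_shell, ENNReal.tsum_mul_right, tsum_shell]
  have hmeas : ∀ m n, Measurable fun w =>
      (shell j m).indicator F w * (shell j n).indicator G (z - w) := fun m n =>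
    (hFm m).mul ((hGm n).comp (measurable_const.sub measurable_id))
  unfold cv
  simp_rw [hpt]
  rw [lintegral_tsum fun m => (Measurable.tsum fun n => hmeas m n).aemeasurable]
  congr 1 with m
  rw [lintegral_tsum fun n => (hmeas m n).aemeasurable]

/-- The localized estimate at modulations `2^m`, `2^n`, expressed through the weighted functions:
the kernel is `r^{|m-n|}` with `r = 2^{-(min a b - 1/(2p))}`. -/
lemma nrm_cv_shell_le (i : ℕ) {a b : ℝ} (ha : 0 ≤ a) (hb : 0 ≤ b)
    (hab : (((2 * (i + 1) + 1 : ℕ) : ℝ) + 1) / (2 * ((2 * (i + 1) + 1 : ℕ) : ℝ)) ≤ a + b)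
    {F G : ℤ × ℝ → ℝ≥0∞} (hF : Measurable F) (hG : Measurable G) (m n : ℕ) :
    nrm zr (cv zr ((shell (i + 1) m).indicator F) ((shell (i + 1) n).indicator G)) ≤
      ENNReal.ofReal (2 ^ (2 * i + 8) + 20) ^ (1 / 2 : ℝ) *
      (ENNReal.ofReal (((2 : ℝ) ^
        (-(min a b - 1 / (2 * ((2 * (i + 1) + 1 : ℕ) : ℝ))))) ^ ((m : ℤ) - n).natAbs) *
      (nrm zr ((shell (i + 1) m).indicator
        fun z => ENNReal.ofReal (jap (sig (i + 1) z.1 z.2) ^ a) * F z) *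
      nrm zr ((shell (i + 1) n).indicator
        fun z => ENNReal.ofReal (jap (sig (i + 1) z.1 z.2) ^ b) * G z))) := by
  set p : ℕ := 2 * (i + 1) + 1 with hp
  have hp0 : (0 : ℝ) < p := by rw [hp]; positivity
  set R : ℝ := 2 ^ (((max m n : ℕ) : ℝ) / p) with hR
  have hRp : R ^ p = 2 ^ (max m n) := by
    rw [hR, ← Real.rpow_natCast, ← Real.rpow_mul (by norm_num), div_mul_cancel₀ _ hp0.ne',
      Real.rpow_natCast]
  have hR1 : 1 ≤ R := Real.one_le_rpow (by norm_num) (by positivity)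
  have supp : ∀ (m : ℕ) (F : ℤ × ℝ → ℝ≥0∞) k τ, (shell (i + 1) m).indicator F (k, τ) ≠ 0 →
      |sig (i + 1) k τ| ≤ 2 * 2 ^ m := by
    intro m F k τ h
    have h' : (k, τ) ∈ shell (i + 1) m := Set.mem_of_indicator_ne_zero h
    have := h'.2.le
    rw [pow_succ'] at this
    exact (abs_le_jap _).trans this
  have h := localized (i := i) hR1 (N₁ := 2 ^ m) (N₂ := 2 ^ n) (by positivity) (by positivity)
    (by rw [← hp, hRp]; gcongr <;> simp) (by rw [← hp, hRp]; gcongr <;> simp)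
    (hF.indicator (measurableSet_shell (i + 1) m)) (hG.indicator (measurableSet_shell (i + 1) n))
    (supp m F) (supp n G)
  refine h.trans ?_
  have hmin : min ((2 : ℝ) ^ m) (2 ^ n) = 2 ^ ((min m n : ℕ) : ℝ) := by
    rw [Real.rpow_natCast]
    rcases le_total m n with h | h
    · rw [min_eq_left h, min_eq_left]; gcongr; norm_num
    · rw [min_eq_right h, min_eq_right]; gcongr; norm_num
  rw [hmin, hR, ← Real.rpow_add (by norm_num), ENNReal.ofReal_mul (by positivity),
    ENNReal.mul_rpow_of_nonneg _ _ (by norm_num), mul_assoc]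
  refine mul_le_mul_right ?_ _
  rw [ENNReal.ofReal_rpow_of_pos (by positivity), ← Real.rpow_mul (by norm_num)]
  refine (mul_le_mul_right (mul_le_mul' (nrm_shell_le (i + 1) m ha hF)
    (nrm_shell_le (i + 1) n hb hG)) _).trans ?_
  rw [mul_mul_mul_comm, ← mul_assoc]
  gcongr ?_ * _
  rw [← ENNReal.ofReal_mul (by positivity), ← ENNReal.ofReal_mul (by positivity),
    ← Real.rpow_add (by norm_num), ← Real.rpow_add (by norm_num), ← Real.rpow_natCast,
    ← Real.rpow_mul (by norm_num)]
  apply ENNReal.ofReal_le_ofReal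
  apply Real.rpow_le_rpow_of_exponent_le (by norm_num)
  have := exponent_le hp0 hab m n
  linarith

lemma l2L2_eq_nrm {f : ℤ → ℝ → ℝ≥0∞} (hf : Measurable (Function.uncurry f)) :
    l2L2 f = nrm zr (Function.uncurry f) := by
  unfold l2L2 nrm
  rw [lintegral_zr (hf.pow_const 2)]
  rfl

/-- Dropping the constraint that both input frequencies are nonzero only increases the
convolution. -/
lemma conv_le_cv {f g : ℤ → ℝ → ℝ≥0∞} (hf : Measurable (Function.uncurry f))
    (hg : Measurable (Function.uncurry g)) (k : ℤ) (τ : ℝ) :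
    conv f g k τ ≤ cv zr (Function.uncurry f) (Function.uncurry g) (k, τ) := by
  have hm : Measurable fun w : ℤ × ℝ =>
      Function.uncurry f w * Function.uncurry g ((k, τ) - w) :=
    hf.mul (hg.comp (measurable_const.sub measurable_id))
  unfold conv cv
  rw [lintegral_zr hm]
  refine ENNReal.tsum_le_tsum fun x => ?_
  split_ifs
  · exact le_rfl
  · exact zero_le

/-- **Lemma 2.2, estimate (2.02):** `‖uv‖_{L²} ≤ C‖u‖_{X_{0,a}}‖v‖_{X_{0,b}}`
on the Fourier side. -/
theorem stmt_4 (j : ℕ) (hj : 1 ≤ j) (a b : ℝ)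
    (hab : ((j : ℝ) + 1) / (2 * (j : ℝ) + 1) ≤ a + b)
    (hmin : 1 / (2 * (2 * (j : ℝ) + 1)) < min a b) :
    ∃ C : ℝ, 0 < C ∧ ∀ f g : ℤ → ℝ → ℝ≥0∞,
      Measurable (Function.uncurry f) → Measurable (Function.uncurry g) →
      (∀ τ, f 0 τ = 0) → (∀ τ, g 0 τ = 0) →
      l2L2 (conv f g) ≤ ENNReal.ofReal C * l2L2 (wt j a f) * l2L2 (wt j b g) := by
  obtain ⟨i, rfl⟩ := Nat.exists_eq_add_of_le' hj
  have hpc : ((2 * (i + 1) + 1 : ℕ) : ℝ) = 2 * ((i + 1 : ℕ) : ℝ) + 1 := by push_cast; ring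
  have hpos : 0 < 1 / (2 * (2 * ((i + 1 : ℕ) : ℝ) + 1)) := by positivity
  have ha : 0 ≤ a := (hpos.trans hmin).le.trans (min_le_left _ _)
  have hb : 0 ≤ b := (hpos.trans hmin).le.trans (min_le_right _ _)
  have hab' : (((2 * (i + 1) + 1 : ℕ) : ℝ) + 1) / (2 * ((2 * (i + 1) + 1 : ℕ) : ℝ)) ≤ a + b := by
    refine le_trans (le_of_eq ?_) hab
    rw [hpc]
    field_simp
    ring
  rw [← hpc] at hmin
  set r : ℝ := (2 : ℝ) ^ (-(min a b - 1 / (2 * ((2 * (i + 1) + 1 : ℕ) : ℝ)))) with hr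
  have hr0 : 0 ≤ r := by positivity
  have hr1 : r < 1 := Real.rpow_lt_one_of_one_lt_of_neg (by norm_num) (by linarith)
  set K : ℝ≥0∞ := ENNReal.ofReal (2 ^ (2 * i + 8) + 20) ^ (1 / 2 : ℝ) *
    ∑' z : ℤ, ENNReal.ofReal (r ^ z.natAbs) with hK
  have hKtop : K ≠ ⊤ := ENNReal.mul_ne_top
    (ENNReal.rpow_ne_top_of_nonneg (by norm_num) ENNReal.ofReal_ne_top)
    (tsum_geometric_int_ne_top hr0 hr1)
  -- the summand `1` makes the constant positive without a lower bound on `K`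
  refine ⟨K.toReal + 1, by positivity, fun f g hf hg _ _ => ?_⟩
  have hKC : K ≤ ENNReal.ofReal (K.toReal + 1) := by
    rw [← ENNReal.ofReal_toReal hKtop]
    apply ENNReal.ofReal_le_ofReal
    rw [ENNReal.toReal_ofReal ENNReal.toReal_nonneg]
    linarith
  set F := Function.uncurry f with hFdef
  set G := Function.uncurry g with hGdef
  have hwf : Measurable fun z : ℤ × ℝ => ENNReal.ofReal (jap (sig (i + 1) z.1 z.2) ^ a) * F z :=
    ((measurable_jap_sig (i + 1)).pow_const a).ennreal_ofReal.mul hf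
  have hwg : Measurable fun z : ℤ × ℝ => ENNReal.ofReal (jap (sig (i + 1) z.1 z.2) ^ b) * G z :=
    ((measurable_jap_sig (i + 1)).pow_const b).ennreal_ofReal.mul hg
  have e1 : l2L2 (wt (i + 1) a f) = nrm zr fun z : ℤ × ℝ =>
      ENNReal.ofReal (jap (sig (i + 1) z.1 z.2) ^ a) * F z := l2L2_eq_nrm hwf
  have e2 : l2L2 (wt (i + 1) b g) = nrm zr fun z : ℤ × ℝ =>
      ENNReal.ofReal (jap (sig (i + 1) z.1 z.2) ^ b) * G z := l2L2_eq_nrm hwg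
  have hFm := fun m => hf.indicator (measurableSet_shell (i + 1) m)
  have hGm := fun m => hg.indicator (measurableSet_shell (i + 1) m)
  have e3 : l2L2 (conv f g) ≤ nrm zr (cv zr F G) := by
    unfold l2L2 nrm
    rw [lintegral_zr ((measurable_cv hf hg).pow_const 2)]
    gcongr with k τ
    exact conv_le_cv hf hg k _
  calc l2L2 (conv f g) ≤ nrm zr (cv zr F G) := e3
    _ = nrm zr fun z => ∑' m : ℕ, ∑' n : ℕ,
        cv zr ((shell (i + 1) m).indicator F) ((shell (i + 1) n).indicator G) z := by
        congr 1 with z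
        exact cv_decomp (i + 1) hf hg z
    _ ≤ ∑' m : ℕ, ∑' n : ℕ, nrm zr
        (cv zr ((shell (i + 1) m).indicator F) ((shell (i + 1) n).indicator G)) :=
        (nrm_tsum_le zr fun m => Measurable.tsum fun n => measurable_cv (hFm m) (hGm n)).trans
          (ENNReal.tsum_le_tsum fun m => nrm_tsum_le zr fun n => measurable_cv (hFm m) (hGm n))
    _ ≤ _ := ENNReal.tsum_le_tsum fun m => ENNReal.tsum_le_tsum fun n =>
        nrm_cv_shell_le i ha hb hab' hf hg m n
    _ ≤ K * (nrm zr (fun z : ℤ × ℝ => ENNReal.ofReal (jap (sig (i + 1) z.1 z.2) ^ a) * F z) *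
        nrm zr fun z : ℤ × ℝ => ENNReal.ofReal (jap (sig (i + 1) z.1 z.2) ^ b) * G z) := by
        simp_rw [ENNReal.tsum_mul_left]
        rw [hK, mul_assoc]
        refine mul_le_mul_right ?_ _
        refine (schur (fun z : ℤ => ENNReal.ofReal (r ^ z.natAbs)) _ _).trans_eq ?_
        rw [tsum_nrm_shell_sq _ hwf, tsum_nrm_shell_sq _ hwg, sq_rpow_half, sq_rpow_half]
    _ ≤ _ := by
        rw [e1, e2, ← mul_assoc]
        gcongr

end
end
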